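/- arXiv:math/0409520 — 6 statements merged into one kernel-verified Lean document; each statement's English description precedes it below -/
import Mathlib

section
/- Let G be a finite-index subgroup of GL(2,ℤ) with −I ∈ G and P = GL(2,ℤ)/G the finite left coset space. For all irrational x, y ∈ (0,1) and all s, t ∈ P, the following are equivalent: (i) there exists γ ∈ GL(2,ℤ) with y = γ·x under the Möbius action and t = γ·s under left multiplication on cosets; (ii) there exist integers n, m ≥ 0 with Tⁿ(x,s) = Tᵐ(y,t), where T is the generalized Gauss shift. In other words, GL(2,ℤ)-orbits on (irrationals in (0,1)) × P coincide with the shift-tail equivalence classes of the generalized continued fraction shift. -/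
set_option synthInstance.maxHeartbeats 1000000
set_option maxHeartbeats 1000000

open Filter MeasureTheory

noncomputable def gaussMap (x : ℝ) : ℝ := 1 / x - ⌊1 / x⌋

noncomputable def cfDigit (x : ℝ) (n : ℕ) : ℤ := ⌊1 / (gaussMap^[n] x)⌋

noncomputable def cfP (x : ℝ) : ℕ → ℤ
  | 0 => 0
  | 1 => 1
  | n + 2 => cfDigit x (n + 1) * cfP x (n + 1) + cfP x n

noncomputable def cfQ (x : ℝ) : ℕ → ℤ
  | 0 => 1
  | 1 => cfDigit x 0
  | n + 2 => cfDigit x (n + 1) * cfQ x (n + 1) + cfQ x n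

abbrev GL2 := Matrix.GeneralLinearGroup (Fin 2) ℤ

def shiftMat (k : ℤ) : GL2 :=
  ⟨!![-k, 1; 1, 0], !![0, 1; 1, k],
    by ext i j; fin_cases i <;> fin_cases j <;>
      simp [Matrix.mul_apply, Fin.sum_univ_two, Matrix.one_apply],
    by ext i j; fin_cases i <;> fin_cases j <;>
      simp [Matrix.mul_apply, Fin.sum_univ_two, Matrix.one_apply]⟩

def cfMat (k : ℤ) : GL2 :=
  ⟨!![0, 1; 1, k], !![-k, 1; 1, 0],
    by ext i j; fin_cases i <;> fin_cases j <;>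
      simp [Matrix.mul_apply, Fin.sum_univ_two, Matrix.one_apply],
    by ext i j; fin_cases i <;> fin_cases j <;>
      simp [Matrix.mul_apply, Fin.sum_univ_two, Matrix.one_apply]⟩

def negOneGL : GL2 :=
  ⟨-1, -1, by simp, by simp⟩

noncomputable def moebius (γ : GL2) (x : ℝ) : ℝ :=
  (((γ : Matrix (Fin 2) (Fin 2) ℤ) 0 0 : ℝ) * x + ((γ : Matrix (Fin 2) (Fin 2) ℤ) 0 1 : ℝ)) /
    (((γ : Matrix (Fin 2) (Fin 2) ℤ) 1 0 : ℝ) * x + ((γ : Matrix (Fin 2) (Fin 2) ℤ) 1 1 : ℝ))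

noncomputable def gaussShiftP (G : Subgroup GL2) :
    ℝ × (GL2 ⧸ G) → ℝ × (GL2 ⧸ G) :=
  fun p => (gaussMap p.1, shiftMat ⌊1 / p.1⌋ • p.2)


def auxU (k : ℤ) : GL2 :=
  ⟨!![1, k; 0, 1], !![1, -k; 0, 1],
    by ext i j; fin_cases i <;> fin_cases j <;>
      simp [Matrix.mul_apply, Fin.sum_univ_two, Matrix.one_apply],
    by ext i j; fin_cases i <;> fin_cases j <;>
      simp [Matrix.mul_apply, Fin.sum_univ_two, Matrix.one_apply]⟩

def auxJ : GL2 :=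
  ⟨!![0, 1; 1, 0], !![0, 1; 1, 0],
    by ext i j; fin_cases i <;> fin_cases j <;>
      simp [Matrix.mul_apply, Fin.sum_univ_two, Matrix.one_apply],
    by ext i j; fin_cases i <;> fin_cases j <;>
      simp [Matrix.mul_apply, Fin.sum_univ_two, Matrix.one_apply]⟩

def auxD : GL2 :=
  ⟨!![-1, 0; 0, 1], !![-1, 0; 0, 1],
    by ext i j; fin_cases i <;> fin_cases j <;>
      simp [Matrix.mul_apply, Fin.sum_univ_two, Matrix.one_apply],
    by ext i j; fin_cases i <;> fin_cases j <;>
      simp [Matrix.mul_apply, Fin.sum_univ_two, Matrix.one_apply]⟩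

theorem aux_det (γ : GL2) : γ.val 0 0 * γ.val 1 1 - γ.val 0 1 * γ.val 1 0 = 1 ∨
    γ.val 0 0 * γ.val 1 1 - γ.val 0 1 * γ.val 1 0 = -1 := by
  have h := Int.isUnit_iff.1 ((Matrix.isUnit_iff_isUnit_det _).1 γ.isUnit)
  rwa [Matrix.det_fin_two] at h

theorem aux_lin (x : ℝ) (hx : Irrational x) (a b : ℚ) (h : (a : ℝ) * x + b = 0) :
    a = 0 ∧ b = 0 := by
  by_cases ha : a = 0
  · subst ha
    refine ⟨rfl, ?_⟩
    simpa using h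
  · exfalso
    apply hx
    refine ⟨-b / a, ?_⟩
    have : (a : ℝ) ≠ 0 := by exact_mod_cast ha
    push_cast
    field_simp
    linarith

theorem aux_den (γ : GL2) (x : ℝ) (hx : Irrational x) :
    (γ.val 1 0 : ℝ) * x + (γ.val 1 1 : ℝ) ≠ 0 := by
  intro h
  have := aux_lin x hx (γ.val 1 0) (γ.val 1 1) (by exact_mod_cast h)
  obtain ⟨h1, h2⟩ := this
  have h1' : γ.val 1 0 = 0 := by exact_mod_cast h1
  have h2' : γ.val 1 1 = 0 := by exact_mod_cast h2
  rcases aux_det γ with h | h <;> rw [h1', h2'] at h <;> simp at h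

theorem aux_irr (γ : GL2) (x : ℝ) (hx : Irrational x) : Irrational (moebius γ x) := by
  rintro ⟨q, hq⟩
  have hd := aux_den γ x hx
  unfold moebius at hq
  rw [eq_div_iff hd] at hq
  obtain ⟨h1, h2⟩ := aux_lin x hx (q * γ.val 1 0 - γ.val 0 0) (q * γ.val 1 1 - γ.val 0 1)
    (by push_cast; linarith)
  have h3 : ((γ.val 0 0 * γ.val 1 1 - γ.val 0 1 * γ.val 1 0 : ℤ) : ℚ) = 0 := by
    push_cast
    linear_combination (-(γ.val 1 1 : ℚ)) * h1 + (γ.val 1 0 : ℚ) * h2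
  have h4 : γ.val 0 0 * γ.val 1 1 - γ.val 0 1 * γ.val 1 0 = 0 := by exact_mod_cast h3
  rcases aux_det γ with h | h <;> omega

theorem aux_moebius_mul (γ δ : GL2) (x : ℝ) (hx : Irrational x) :
    moebius (γ * δ) x = moebius γ (moebius δ x) := by
  have h1 := aux_den (γ * δ) x hx
  have h2 := aux_den δ x hx
  have h3 := aux_den γ _ (aux_irr δ x hx)
  unfold moebius at h3 ⊢
  simp only [Units.val_mul, Matrix.mul_apply, Fin.sum_univ_two, Int.cast_add, Int.cast_mul] at h1 ⊢
  rw [div_eq_div_iff h1 h3]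
  field_simp
  ring

section
variable (G : Subgroup GL2)

noncomputable def auxAct (γ : GL2) (p : ℝ × (GL2 ⧸ G)) : ℝ × (GL2 ⧸ G) :=
  (moebius γ p.1, γ • p.2)

theorem auxAct_mul (γ δ : GL2) (p : ℝ × (GL2 ⧸ G)) (hp : Irrational p.1) :
    auxAct G γ (auxAct G δ p) = auxAct G (γ * δ) p := by
  simp [auxAct, aux_moebius_mul γ δ _ hp, mul_smul]

theorem auxAct_irr (γ : GL2) (p : ℝ × (GL2 ⧸ G)) (hp : Irrational p.1) :
    Irrational (auxAct G γ p).1 := aux_irr γ _ hp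

theorem auxAct_one (p : ℝ × (GL2 ⧸ G)) : auxAct G 1 p = p := by
  simp [auxAct, moebius]

theorem auxAct_neg (hneg : negOneGL ∈ G) (γ : GL2) (p : ℝ × (GL2 ⧸ G)) :
    auxAct G (-γ) p = auxAct G γ p := by
  refine Prod.ext ?_ ?_
  · simp only [auxAct, moebius, Units.val_neg, Matrix.neg_apply, Int.cast_neg]
    rw [← neg_div_neg_eq]
    congr 1 <;> ring
  · obtain ⟨x, s⟩ := p
    induction s using QuotientGroup.induction_on with
    | H g =>
      change ((((-γ) * g : GL2)) : GL2 ⧸ G) = ((γ * g : GL2) : GL2 ⧸ G)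
      rw [QuotientGroup.eq]
      have : (-γ * g)⁻¹ * (γ * g) = negOneGL := by
        have h : negOneGL = -1 := by ext; simp [negOneGL]
        rw [h, inv_mul_eq_iff_eq_mul]
        simp
      rw [this]; exact hneg

theorem aux_T (p : ℝ × (GL2 ⧸ G)) (hp : Irrational p.1) :
    gaussShiftP G p = auxAct G (shiftMat ⌊1 / p.1⌋) p := by
  have := hp.ne_zero
  refine Prod.ext ?_ rfl
  simp only [gaussShiftP, auxAct, moebius, shiftMat, gaussMap]
  simp [-Int.self_sub_floor]
  field_simp
  ring

theorem aux_Tn (n : ℕ) (p : ℝ × (GL2 ⧸ G)) (hp : Irrational p.1) :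
    ∃ γ : GL2, (gaussShiftP G)^[n] p = auxAct G γ p := by
  induction n generalizing p with
  | zero => exact ⟨1, (auxAct_one G p).symm⟩
  | succ n ih =>
    rw [Function.iterate_succ_apply, aux_T G p hp]
    obtain ⟨γ, h⟩ := ih _ (auxAct_irr G (shiftMat ⌊1 / p.1⌋) p hp)
    exact ⟨_, by rw [h, auxAct_mul G _ _ p hp]⟩

noncomputable def auxF (p : ℝ × (GL2 ⧸ G)) : ℝ × (GL2 ⧸ G) := auxAct G (auxU (-⌊p.1⌋)) p

def auxRel (p q : ℝ × (GL2 ⧸ G)) : Prop :=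
  ∃ n m : ℕ, (gaussShiftP G)^[n] (auxF G p) = (gaussShiftP G)^[m] (auxF G q)

theorem auxRel_symm {p q : ℝ × (GL2 ⧸ G)} (h : auxRel G p q) : auxRel G q p := by
  obtain ⟨n, m, h⟩ := h
  exact ⟨m, n, h.symm⟩

theorem auxRel_trans {p q r : ℝ × (GL2 ⧸ G)} (h : auxRel G p q) (h' : auxRel G q r) :
    auxRel G p r := by
  obtain ⟨n, m, h⟩ := h
  obtain ⟨k, l, h'⟩ := h'
  refine ⟨k + n, m + l, ?_⟩
  rw [Function.iterate_add_apply, h, Function.iterate_add_apply, ← h',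
    ← Function.iterate_add_apply, ← Function.iterate_add_apply, add_comm]

theorem auxU_mul (k l : ℤ) : auxU k * auxU l = auxU (k + l) := by
  ext i j; fin_cases i <;> fin_cases j <;>
      simp [auxU, Matrix.mul_apply, Fin.sum_univ_two, add_comm]

theorem auxU_zero : auxU 0 = 1 := by
  ext i j; fin_cases i <;> fin_cases j <;> simp [auxU]

theorem auxU_fst (k : ℤ) (p : ℝ × (GL2 ⧸ G)) : (auxAct G (auxU k) p).1 = p.1 + k := by
  simp [auxAct, moebius, auxU]

theorem auxJ_fst (p : ℝ × (GL2 ⧸ G)) : (auxAct G auxJ p).1 = 1 / p.1 := by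
  simp [auxAct, moebius, auxJ]

theorem auxD_fst (p : ℝ × (GL2 ⧸ G)) : (auxAct G auxD p).1 = - p.1 := by
  simp [auxAct, moebius, auxD]

theorem auxJ_mul : auxJ * auxJ = 1 := by
  ext i j; fin_cases i <;> fin_cases j <;> simp [auxJ, Matrix.mul_apply, Fin.sum_univ_two]

theorem auxRel_U (k : ℤ) (p : ℝ × (GL2 ⧸ G)) (hp : Irrational p.1) :
    auxRel G p (auxAct G (auxU k) p) := by
  refine ⟨0, 0, ?_⟩
  simp only [Function.iterate_zero, id]
  rw [auxF, auxF, auxAct_mul G _ _ _ hp, auxU_mul, auxU_fst]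
  congr 2
  rw [Int.floor_add_intCast]; ring

theorem auxF_id (p : ℝ × (GL2 ⧸ G)) (h0 : 0 < p.1) (h1 : p.1 < 1) : auxF G p = p := by
  have : ⌊p.1⌋ = 0 := Int.floor_eq_iff.2 ⟨by simpa using h0.le, by simpa using h1⟩
  rw [auxF, this, neg_zero, auxU_zero, auxAct_one]

theorem auxRel_J1 (p : ℝ × (GL2 ⧸ G)) (hp : Irrational p.1) (h0 : 0 < p.1) (h1 : p.1 < 1) :
    auxRel G p (auxAct G auxJ p) := by
  refine ⟨1, 0, ?_⟩
  simp only [Function.iterate_zero, id, Function.iterate_one]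
  rw [auxF_id G p h0 h1, aux_T G p hp, auxF, auxAct_mul G _ _ _ hp, auxJ_fst]
  congr 1
  ext i j; fin_cases i <;> fin_cases j <;>
    simp [auxJ, auxU, shiftMat, Matrix.mul_apply, Fin.sum_univ_two]

theorem auxRel_J2 (p : ℝ × (GL2 ⧸ G)) (hp : Irrational p.1) (h0 : 0 < p.1) :
    auxRel G p (auxAct G auxJ p) := by
  rcases lt_trichotomy p.1 1 with h | h | h
  · exact auxRel_J1 G p hp h0 h
  · exact absurd h hp.ne_one
  · have := auxRel_J1 G (auxAct G auxJ p) (auxAct_irr G _ p hp)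
      (by rw [auxJ_fst]; positivity) (by rw [auxJ_fst, div_lt_one h0]; exact h)
    rw [auxAct_mul G _ _ _ hp, auxJ_mul, auxAct_one] at this
    exact auxRel_symm G this

theorem aux_word : auxJ * auxU 1 * auxJ * auxU (-1) * auxJ * auxU 1 * auxD = 1 ∨
    auxJ * auxU 1 * auxJ * auxU (-1) * auxJ * auxU 1 * auxD = -1 := by
  first
  | left
    ext i j; fin_cases i <;> fin_cases j <;>
      simp [auxJ, auxU, auxD, Matrix.mul_apply, Fin.sum_univ_two] <;> done
  | right
    ext i j; fin_cases i <;> fin_cases j <;>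
      simp [auxJ, auxU, auxD, Matrix.mul_apply, Fin.sum_univ_two] <;> done

theorem auxRel_D1 (hneg : negOneGL ∈ G) (p : ℝ × (GL2 ⧸ G)) (hp : Irrational p.1)
    (h0 : 0 < p.1) (h1 : p.1 < 1) :
    auxRel G p (auxAct G auxD p) := by
  apply auxRel_symm
  set q0 := auxAct G auxD p with hq0
  have i0 : Irrational q0.1 := auxAct_irr G _ _ hp
  have e0 : q0.1 = - p.1 := auxD_fst G p
  set q1 := auxAct G (auxU 1) q0 with hq1
  have i1 : Irrational q1.1 := auxAct_irr G _ _ i0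
  have e1 : q1.1 = 1 - p.1 := by rw [hq1, auxU_fst, e0]; push_cast; ring
  have p1 : 0 < 1 - p.1 := by linarith
  set q2 := auxAct G auxJ q1 with hq2
  have i2 : Irrational q2.1 := auxAct_irr G _ _ i1
  have e2 : q2.1 = 1 / (1 - p.1) := by rw [hq2, auxJ_fst, e1]
  set q3 := auxAct G (auxU (-1)) q2 with hq3
  have i3 : Irrational q3.1 := auxAct_irr G _ _ i2
  have e3 : q3.1 = p.1 / (1 - p.1) := by
    rw [hq3, auxU_fst, e2]; push_cast; field_simp; ring
  set q4 := auxAct G auxJ q3 with hq4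
  have i4 : Irrational q4.1 := auxAct_irr G _ _ i3
  have e4 : q4.1 = (1 - p.1) / p.1 := by rw [hq4, auxJ_fst, e3, one_div_div]
  set q5 := auxAct G (auxU 1) q4 with hq5
  have i5 : Irrational q5.1 := auxAct_irr G _ _ i4
  have e5 : q5.1 = 1 / p.1 := by
    rw [hq5, auxU_fst, e4]; push_cast; field_simp; ring
  have e6 : auxAct G auxJ q5 = p := by
    rw [hq5, auxAct_mul G _ _ _ i4, hq4, auxAct_mul G _ _ _ i3, hq3, auxAct_mul G _ _ _ i2,
      hq2, auxAct_mul G _ _ _ i1, hq1, auxAct_mul G _ _ _ i0, hq0, auxAct_mul G _ _ _ hp]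
    rcases aux_word with h | h
    · rw [h, auxAct_one]
    · rw [h, auxAct_neg G hneg, auxAct_one]
  have r1 : auxRel G q0 q1 := auxRel_U G 1 q0 i0
  have r2 : auxRel G q1 q2 := auxRel_J2 G q1 i1 (by rw [e1]; exact p1)
  have r3 : auxRel G q2 q3 := auxRel_U G _ q2 i2
  have r4 : auxRel G q3 q4 := auxRel_J2 G q3 i3 (by rw [e3]; positivity)
  have r5 : auxRel G q4 q5 := auxRel_U G _ q4 i4
  have r6 : auxRel G q5 p := by
    have := auxRel_J2 G q5 i5 (by rw [e5]; positivity)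
    rwa [e6] at this
  exact auxRel_trans G r1 (auxRel_trans G r2 (auxRel_trans G r3 (auxRel_trans G r4
    (auxRel_trans G r5 r6))))

theorem auxRel_D (hneg : negOneGL ∈ G) (p : ℝ × (GL2 ⧸ G)) (hp : Irrational p.1) :
    auxRel G p (auxAct G auxD p) := by
  have r1 := auxRel_U G (-⌊p.1⌋) p hp
  set q := auxAct G (auxU (-⌊p.1⌋)) p with hq
  have iq : Irrational q.1 := auxAct_irr G _ _ hp
  have e1 : q.1 = Int.fract p.1 := by
    rw [hq, auxU_fst]; push_cast; rw [← sub_eq_add_neg, Int.self_sub_floor]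
  have r2 := auxRel_D1 G hneg q iq
    (lt_of_le_of_ne (by rw [e1]; exact Int.fract_nonneg _) iq.ne_zero.symm)
    (by rw [e1]; exact Int.fract_lt_one _)
  have r3 := auxRel_U G (-⌊p.1⌋) _ (auxAct_irr G auxD q iq)
  have e : auxAct G (auxU (-⌊p.1⌋)) (auxAct G auxD q) = auxAct G auxD p := by
    rw [auxAct_mul G _ _ _ iq, hq, auxAct_mul G _ _ _ hp]
    congr 1
    ext i j; fin_cases i <;> fin_cases j <;>
      simp [auxU, auxD, Matrix.mul_apply, Fin.sum_univ_two]
  rw [e] at r3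
  exact auxRel_trans G r1 (auxRel_trans G r2 r3)

theorem auxRel_J (hneg : negOneGL ∈ G) (p : ℝ × (GL2 ⧸ G)) (hp : Irrational p.1) :
    auxRel G p (auxAct G auxJ p) := by
  rcases lt_or_gt_of_ne hp.ne_zero with h | h
  · have r1 := auxRel_D G hneg p hp
    have i1 := auxAct_irr G auxD p hp
    have r2 := auxRel_J2 G _ i1 (by rw [auxD_fst]; linarith)
    have i2 := auxAct_irr G auxJ _ i1
    have r3 := auxRel_D G hneg _ i2
    have e : auxAct G auxD (auxAct G auxJ (auxAct G auxD p)) = auxAct G auxJ p := by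
      rw [auxAct_mul G _ _ _ i1, auxAct_mul G _ _ _ hp, ← auxAct_neg G hneg auxJ]
      congr 1
      ext i j; fin_cases i <;> fin_cases j <;>
        simp [auxJ, auxD, Matrix.mul_apply, Fin.sum_univ_two]
    rw [e] at r3
    exact auxRel_trans G r1 (auxRel_trans G r2 r3)
  · exact auxRel_J2 G p hp h

def auxH : Subgroup GL2 where
  carrier := {γ | ∀ p : ℝ × (GL2 ⧸ G), Irrational p.1 → auxRel G p (auxAct G γ p)}
  mul_mem' := by
    intro a b ha hb p hp
    rw [← auxAct_mul G _ _ _ hp]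
    exact auxRel_trans G (hb p hp) (ha _ (auxAct_irr G _ _ hp))
  one_mem' := by
    intro p hp
    rw [auxAct_one]
    exact ⟨0, 0, rfl⟩
  inv_mem' := by
    intro a ha p hp
    have := ha _ (auxAct_irr G a⁻¹ p hp)
    rw [auxAct_mul G _ _ _ hp, mul_inv_cancel, auxAct_one] at this
    exact auxRel_symm G this

end

theorem aux_gen (H : Subgroup GL2) (hU : auxU 1 ∈ H) (hJ : auxJ ∈ H) (hD : auxD ∈ H)
    (γ : GL2) : γ ∈ H := by
  have hSL : ∀ g : Matrix.SpecialLinearGroup (Fin 2) ℤ,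
      Matrix.SpecialLinearGroup.toGL g ∈ H := by
    have : (⊤ : Subgroup (Matrix.SpecialLinearGroup (Fin 2) ℤ)) ≤
        H.comap Matrix.SpecialLinearGroup.toGL := by
      rw [← SpecialLinearGroup.SL2Z_generators, Subgroup.closure_le]
      rintro g (rfl | rfl)
      · have h : Matrix.SpecialLinearGroup.toGL ModularGroup.S = auxD * auxJ := by
          ext i j; fin_cases i <;> fin_cases j <;>
            simp [auxJ, auxD, ModularGroup.S, Matrix.mul_apply, Fin.sum_univ_two] <;> rfl
        change Matrix.SpecialLinearGroup.toGL ModularGroup.S ∈ H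
        rw [h]; exact H.mul_mem hD hJ
      · have h : Matrix.SpecialLinearGroup.toGL ModularGroup.T = auxU 1 := by
          ext i j; fin_cases i <;> fin_cases j <;>
            simp [auxU, ModularGroup.T] <;> rfl
        change Matrix.SpecialLinearGroup.toGL ModularGroup.T ∈ H
        rw [h]; exact hU
    intro g
    exact this (Subgroup.mem_top g)
  have key : ∀ δ : GL2, δ.val.det = 1 → δ ∈ H := by
    intro δ h
    have := hSL ⟨δ.val, h⟩
    convert this using 1
    ext; rfl
  rcases Int.isUnit_iff.1 ((Matrix.isUnit_iff_isUnit_det _).1 γ.isUnit) with h | h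
  · exact key γ h
  · have h2 := key (auxD * γ) (by
      rw [Units.val_mul, Matrix.det_mul, h]; simp [auxD, Matrix.det_fin_two])
    exact (H.mul_mem_cancel_left hD).1 h2

/-- `GL(2,ℤ)`-orbits on (irrationals in `(0,1)`) × `P` coincide with the
shift-tail equivalence classes of the generalized Gauss shift. -/
theorem stmt0 (G : Subgroup GL2) (hGfin : G.FiniteIndex) (hneg : negOneGL ∈ G)
    (x y : ℝ) (hx : x ∈ Set.Ioo (0 : ℝ) 1) (hy : y ∈ Set.Ioo (0 : ℝ) 1)
    (hxI : Irrational x) (hyI : Irrational y)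
    (s t : GL2 ⧸ G) :
    (∃ γ : GL2, y = moebius γ x ∧ t = γ • s) ↔
      ∃ n m : ℕ, (gaussShiftP G)^[n] (x, s) = (gaussShiftP G)^[m] (y, t) := by
  constructor
  · rintro ⟨γ, rfl, rfl⟩
    have hγ : γ ∈ auxH G := aux_gen (auxH G) (fun p hp => auxRel_U G 1 p hp)
      (fun p hp => auxRel_J G hneg p hp) (fun p hp => auxRel_D G hneg p hp) γ
    obtain ⟨n, m, h⟩ := hγ (x, s) hxI
    rw [auxF_id G (x, s) hx.1 hx.2, auxF_id G (auxAct G γ (x, s)) hy.1 hy.2] at h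
    exact ⟨n, m, h⟩
  · rintro ⟨n, m, h⟩
    obtain ⟨a, ha⟩ := aux_Tn G n (x, s) hxI
    obtain ⟨b, hb⟩ := aux_Tn G m (y, t) hyI
    rw [ha, hb] at h
    have h2 := congrArg (auxAct G b⁻¹) h
    rw [auxAct_mul G _ _ _ hxI, auxAct_mul G _ _ _ hyI, inv_mul_cancel, auxAct_one] at h2
    exact ⟨b⁻¹ * a, (congrArg Prod.fst h2).symm, (congrArg Prod.snd h2).symm⟩
end

section
/- For Lebesgue-almost every x ∈ (0,1), the Lyapunov exponent of the Gauss shift λ(x) = lim_{n→∞} (1/n)·log|(Tⁿ)′(x)| exists and equals π²/(6·log 2); equivalently, for Lebesgue-almost every x ∈ (0,1), lim_{n→∞} (1/n)·log qₙ(x) = π²/(12·log 2). -/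
set_option synthInstance.maxHeartbeats 1000000
set_option maxHeartbeats 1000000

open Filter MeasureTheory

theorem abs_birk {α : Type*} [MeasurableSpace α] (μ : Measure α) [IsProbabilityMeasure μ]
    (T : α → α) (hT : MeasurePreserving T μ μ) (f : α → ℝ) (hf0 : ∀ x, 0 ≤ f x)
    (hf : MemLp f 2 μ) (m C : ℝ) (hm : ∫ x, f x ∂μ = m) (hC : 0 ≤ C)
    (hc : ∀ n, ∫ x, f x * f (T^[n] x) ∂μ ≤ m ^ 2 + C * (1/2) ^ n) :
    ∀ᵐ x ∂μ, Tendsto (fun n : ℕ => birkhoffSum T f n x / n) atTop (nhds m) := by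
  have hfi : ∀ i, MemLp (fun x => f (T^[i] x)) 2 μ := fun i =>
    hf.comp_measurePreserving (hT.iterate i)
  have hS : ∀ n, MemLp (birkhoffSum T f n) 2 μ := by
    intro n
    have : birkhoffSum T f n = fun x => ∑ i ∈ Finset.range n, f (T^[i] x) := rfl
    rw [this]
    exact memLp_finsetSum _ (fun i _ => hfi i)
  have hinv : ∀ (g : α → ℝ), AEStronglyMeasurable g μ → ∫ x, g (T x) ∂μ = ∫ x, g x ∂μ := by
    intro g hg
    have h1 := integral_map hT.measurable.aemeasurable (f := g) (by rw [hT.map_eq]; exact hg)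
    rw [hT.map_eq] at h1
    exact h1.symm
  have hES : ∀ n : ℕ, ∫ x, birkhoffSum T f n x ∂μ = n * m := by
    intro n
    induction n with
    | zero => simp
    | succ n ih =>
      simp_rw [birkhoffSum_succ' T f n]
      have j : Integrable (fun x => birkhoffSum T f n (T x)) μ :=
        ((hS n).comp_measurePreserving hT).integrable (by norm_num)
      rw [integral_add (hf.integrable (by norm_num)) j,
        hinv _ (hS n).1, ih, hm]
      push_cast; ring
  have hES2 : ∀ n : ℕ, ∫ x, (birkhoffSum T f n x) ^ 2 ∂μ ≤ n ^ 2 * m ^ 2 + 3 * C * n := by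
    intro n
    induction n with
    | zero => simp
    | succ n ih =>
      have hST := (hS n).comp_measurePreserving hT
      have e : ∀ x, (birkhoffSum T f (n+1) x) ^ 2 =
          f x * f x + 2 * (∑ i ∈ Finset.range n, f x * f (T^[i+1] x))
            + (birkhoffSum T f n (T x)) ^ 2 := by
        intro x
        rw [birkhoffSum_succ' T f n, ← Finset.mul_sum]
        have : ∑ i ∈ Finset.range n, f (T^[i+1] x) = birkhoffSum T f n (T x) := by
          simp [birkhoffSum]
        rw [this]; ring
      simp_rw [e]
      have i1 : ∀ i, Integrable (fun x => f x * f (T^[i] x)) μ := fun i => hf.integrable_mul (hfi i)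
      have i2 : Integrable (fun x => ∑ i ∈ Finset.range n, f x * f (T^[i+1] x)) μ :=
        integrable_finsetSum _ (fun i _ => i1 (i+1))
      have i3 : Integrable (fun x => (birkhoffSum T f n (T x)) ^ 2) μ := hST.integrable_sq
      have i0 : Integrable (fun x => f x * f x) μ := i1 0
      have i4 : Integrable (fun x => f x * f x +
          2 * ∑ i ∈ Finset.range n, f x * f (T^[i+1] x)) μ := i0.add (i2.const_mul 2)
      rw [integral_add i4 i3, integral_add i0 (i2.const_mul 2),
        integral_const_mul, integral_finsetSum _ (fun i _ => i1 (i+1)),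
        hinv (fun x => (birkhoffSum T f n x)^2) (hS n).integrable_sq.1]
      have h0 := hc 0
      simp only [Function.iterate_zero, id, pow_zero, mul_one] at h0
      have h1 : ∑ i ∈ Finset.range n, ∫ x, f x * f (T^[i+1] x) ∂μ ≤ n * m ^ 2 + C := by
        calc _ ≤ ∑ i ∈ Finset.range n, (m ^ 2 + C * (1/2) ^ (i+1)) :=
              Finset.sum_le_sum (fun i _ => hc (i+1))
          _ ≤ _ := by
            rw [Finset.sum_add_distrib, ← Finset.mul_sum]
            have : ∑ i ∈ Finset.range n, (1/2:ℝ) ^ (i+1) = 1 - (1/2)^n := by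
              clear * -
              induction n with
              | zero => simp
              | succ n ih => rw [Finset.sum_range_succ, ih]; ring
            rw [this]
            have : (0:ℝ) ≤ (1/2)^n := by positivity
            simp only [Finset.sum_const, Finset.card_range, nsmul_eq_mul]
            nlinarith
      push_cast
      nlinarith
  have hV : ∀ n : ℕ, ∫ x, (birkhoffSum T f n x - n * m) ^ 2 ∂μ ≤ 3 * C * n := by
    intro n
    have e : ∀ x, (birkhoffSum T f n x - n * m) ^ 2 =
      (birkhoffSum T f n x) ^ 2 - (2 * n * m) * birkhoffSum T f n x + (n*m)^2 := by
        intro x; ring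
    simp_rw [e]
    have i1 := (hS n).integrable_sq
    have i2 : Integrable (fun x => (2 * n * m) * birkhoffSum T f n x) μ :=
      ((hS n).integrable (by norm_num)).const_mul _
    have i3 : Integrable (fun x => (birkhoffSum T f n x) ^ 2
        - (2 * n * m) * birkhoffSum T f n x) μ := i1.sub i2
    rw [integral_add i3 (integrable_const _), integral_sub i1 i2, integral_const_mul, hES]
    simp only [integral_const, probReal_univ, smul_eq_mul]
    nlinarith [hES2 n]
  let Y : ℕ → α → ℝ := fun k x =>
    ((birkhoffSum T f ((k+1)^2) x - ((k+1)^2 : ℕ) * m) / ((k+1)^2 : ℕ)) ^ 2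
  have hYm : ∀ k, Integrable (Y k) μ := by
    intro k
    have : MemLp (fun x => (birkhoffSum T f ((k+1)^2) x - ((k+1)^2 : ℕ) * m) / ((k+1)^2 : ℕ)) 2 μ := by
      simp_rw [div_eq_inv_mul]
      exact ((hS _).sub (memLp_const _)).const_mul _
    exact this.integrable_sq
  have hY : ∀ k, ∫⁻ x, ENNReal.ofReal (Y k x) ∂μ ≤ ENNReal.ofReal (3 * C * (1/((k:ℝ)+1)^2)) := by
    intro k
    rw [← ofReal_integral_eq_lintegral_ofReal (hYm k) (ae_of_all _ fun x => sq_nonneg _)]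
    apply ENNReal.ofReal_le_ofReal
    simp only [Y, div_pow]
    rw [integral_div, div_le_iff₀ (by positivity)]
    refine (hV _).trans (le_of_eq ?_)
    push_cast
    field_simp
  have hsum : ∫⁻ x, ∑' k, ENNReal.ofReal (Y k x) ∂μ ≠ ⊤ := by
    rw [lintegral_tsum (fun k => (hYm k).1.aemeasurable.ennreal_ofReal)]
    have hs : Summable (fun k : ℕ => 3 * C * (1/((k:ℝ)+1)^2)) := by
      apply Summable.mul_left
      have := (summable_nat_add_iff 1).2 (Real.summable_one_div_nat_pow.2 (by norm_num : 1 < 2))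
      simpa using this
    refine ne_top_of_le_ne_top ?_ (ENNReal.tsum_le_tsum hY)
    exact hs.tsum_ofReal_ne_top
  have hae := ae_lt_top' (AEMeasurable.tsum
    (fun k => (hYm k).1.aemeasurable.ennreal_ofReal)) hsum
  filter_upwards [hae] with x hx
  have ht : Tendsto (fun k => ENNReal.ofReal (Y k x)) atTop (nhds 0) := by
    have := ENNReal.tendsto_cofinite_zero_of_tsum_ne_top hx.ne
    rwa [Nat.cofinite_eq_atTop] at this
  have ht2 : Tendsto (fun k => Y k x) atTop (nhds 0) := by
    have := (ENNReal.tendsto_toReal ENNReal.zero_ne_top).comp ht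
    simp only [ENNReal.toReal_zero] at this
    refine this.congr (fun k => ?_)
    simp only [Function.comp]
    exact ENNReal.toReal_ofReal (sq_nonneg _)
  have ht3 : Tendsto (fun k : ℕ => (birkhoffSum T f ((k+1)^2) x - ((k+1)^2 : ℕ) * m) / ((k+1)^2 : ℕ))
      atTop (nhds 0) := by
    have := ht2.sqrt
    simp only [Y, Real.sqrt_sq_eq_abs, Real.sqrt_zero] at this
    exact (tendsto_zero_iff_abs_tendsto_zero _).2 this
  have ht4 : Tendsto (fun k : ℕ => birkhoffSum T f ((k+1)^2) x / ((k+1)^2 : ℕ))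
      atTop (nhds m) := by
    have := ht3.add_const m
    rw [zero_add] at this
    refine this.congr (fun k => ?_)
    have : (((k+1)^2 : ℕ) : ℝ) ≠ 0 := by positivity
    field_simp
    ring
  have hmono : Monotone (fun n => birkhoffSum T f n x) := by
    refine monotone_nat_of_le_succ (fun n => ?_)
    rw [birkhoffSum_succ]
    linarith [hf0 (T^[n] x)]
  refine tendsto_div_of_monotone_of_exists_subseq_tendsto_div _ m hmono ?_
  intro a ha
  refine ⟨fun k => (k+1)^2, ?_, ?_, ht4⟩
  · have h1 : Tendsto (fun k : ℕ => (1 + 1 / ((k:ℝ)+1))^2) atTop (nhds ((1+0)^2)) :=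
      (tendsto_one_div_add_atTop_nhds_zero_nat.const_add 1).pow 2
    have h2 := h1.eventually_lt_const (show (1+0:ℝ)^2 < a by simpa using ha)
    filter_upwards [h2] with k hk
    push_cast
    have : ((k:ℝ)+1+1)^2 = (1 + 1 / ((k:ℝ)+1))^2 * ((k:ℝ)+1)^2 := by
      have : (k:ℝ)+1 ≠ 0 := by positivity
      field_simp
    rw [this]
    gcongr
  · exact tendsto_atTop_mono (fun k => by nlinarith : ∀ k : ℕ, k ≤ (k+1)^2) tendsto_id

noncomputable def gU (k : ℕ) (y : ℝ) : ℝ := 1 / (k + 1 + y)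
noncomputable def gP (k : ℕ) (x : ℝ) : ℝ := (1 + x) / ((k + 1 + x) * (k + 2 + x))
noncomputable def gW (x : ℝ) : ℝ := 1 / (Real.log 2 * (1 + x))
noncomputable def muG : Measure ℝ :=
  (volume.restrict (Set.Ioo (0:ℝ) 1)).withDensity (fun x => ENNReal.ofReal (gW x))
noncomputable def gLE (F : ℝ → ENNReal) (x : ℝ) : ENNReal :=
  ∑' k : ℕ, ENNReal.ofReal (gP k x) * F (gU k x)

theorem gW_meas : Measurable gW := by unfold gW; fun_prop
theorem gP_meas (k : ℕ) : Measurable (gP k) := by unfold gP; fun_prop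
theorem gU_meas (k : ℕ) : Measurable (gU k) := by unfold gU; fun_prop
theorem gaussMap_meas : Measurable gaussMap := by
  unfold gaussMap
  have : Measurable (fun x : ℝ => 1 / x) := by fun_prop
  exact this.sub ((measurable_from_top (f := fun n : ℤ => (n:ℝ))).comp this.floor)

theorem gLE_meas {F : ℝ → ENNReal} (hF : Measurable F) : Measurable (gLE F) := by
  unfold gLE
  exact Measurable.tsum (fun k => (gP_meas k).ennreal_ofReal.mul (hF.comp (gU_meas k)))

theorem lint_muG (H : ℝ → ENNReal) (hH : Measurable H) :
    ∫⁻ x, H x ∂muG = ∫⁻ x in Set.Ioo (0:ℝ) 1, ENNReal.ofReal (gW x) * H x := by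
  unfold muG
  rw [lintegral_withDensity_eq_lintegral_mul _ gW_meas.ennreal_ofReal hH]
  rfl

theorem gU_image (k : ℕ) : gU k '' Set.Ico 0 1 = Set.Ioc (1/((k:ℝ)+2)) (1/((k:ℝ)+1)) := by
  ext x
  constructor
  · rintro ⟨y, ⟨h0, h1⟩, rfl⟩
    unfold gU
    constructor
    · apply one_div_lt_one_div_of_lt <;> [positivity; linarith]
    · apply one_div_le_one_div_of_le <;> [positivity; linarith]
  · rintro ⟨h0, h1⟩
    have hx : 0 < x := lt_trans (by positivity) h0
    rw [one_div_lt (by positivity) hx] at h0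
    rw [le_one_div hx (by positivity)] at h1
    refine ⟨1/x - (k+1), ⟨by linarith, by linarith⟩, ?_⟩
    unfold gU
    field_simp
    ring

theorem iUnion_pieces : (⋃ k : ℕ, gU k '' Set.Ico 0 1) = Set.Ioc (0:ℝ) 1 := by
  ext x
  simp only [gU_image, Set.mem_iUnion]
  constructor
  · rintro ⟨k, h0, h1⟩
    refine ⟨lt_trans (by positivity) h0, h1.trans ?_⟩
    rw [div_le_one (by positivity)]
    have : (0:ℝ) ≤ k := by positivity
    linarith
  · rintro ⟨h0, h1⟩
    have h2 : 1 ≤ 1 / x := by rwa [le_div_iff₀ h0, one_mul]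
    have h3 : 1 ≤ ⌊1/x⌋₊ := Nat.le_floor (by simpa using h2)
    obtain ⟨k, hk⟩ := Nat.exists_eq_add_of_le' h3
    have h4 := Nat.floor_le (show 0 ≤ 1/x by positivity)
    have h5 := Nat.lt_floor_add_one (1/x)
    rw [hk] at h4 h5
    push_cast at h4 h5
    refine ⟨k, ?_, ?_⟩
    · rw [one_div_lt (by positivity) h0]; linarith
    · rw [le_one_div h0 (by positivity)]; linarith

theorem pieces_disj : Pairwise (Function.onFun Disjoint (fun k : ℕ => gU k '' Set.Ico 0 1)) := by
  refine (pairwise_disjoint_on _).2 ?_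
  intro i j hij
  rw [gU_image, gU_image, Set.disjoint_left]
  rintro x ⟨h0, h1⟩ ⟨h2, h3⟩
  have : (1:ℝ)/(j+1) ≤ 1/(i+2) := by
    apply one_div_le_one_div_of_le (by positivity)
    have : (i:ℝ) + 1 ≤ j := by exact_mod_cast hij
    linarith
  linarith

theorem gauss_gU (k : ℕ) {y : ℝ} (hy : y ∈ Set.Ico (0:ℝ) 1) : gaussMap (gU k y) = y := by
  unfold gaussMap gU
  have : ⌊(k:ℝ) + 1 + y⌋ = (k:ℤ) + 1 := by
    rw [Int.floor_eq_iff]; push_cast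
    exact ⟨by linarith [hy.1], by linarith [hy.2]⟩
  rw [one_div_one_div, this]; push_cast; ring

theorem gW_gU (k : ℕ) {y : ℝ} (hy : 0 ≤ y) :
    |-(1 / ((k:ℝ) + 1 + y)^2)| * gW (gU k y) = gW y * gP k y := by
  rw [abs_neg, abs_of_nonneg (by positivity)]
  unfold gW gU gP
  have h1 : (k:ℝ) + 1 + y ≠ 0 := by positivity
  have h2 : (k:ℝ) + 2 + y ≠ 0 := by positivity
  have h3 : 1 + y ≠ 0 := by positivity
  have h4 : 1 + 1 / ((k:ℝ) + 1 + y) = (k + 2 + y) / (k+1+y) := by field_simp; ring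
  rw [h4]
  have h5 : Real.log 2 ≠ 0 := (Real.log_pos (by norm_num)).ne'
  field_simp

theorem duality (F G : ℝ → ENNReal) (hF : Measurable F) (hG : Measurable G) :
    ∫⁻ x, F x * G (gaussMap x) ∂muG = ∫⁻ x, gLE F x * G x ∂muG := by
  rw [lint_muG (fun x => F x * G (gaussMap x)) (hF.mul (hG.comp gaussMap_meas)),
    lint_muG (fun x => gLE F x * G x) ((gLE_meas hF).mul hG)]
  have hR : volume.restrict (Set.Ioc (0:ℝ) 1) = volume.restrict (Set.Ico (0:ℝ) 1) :=
    (Measure.restrict_congr_set (Ioo_ae_eq_Ioc (a := (0:ℝ)) (b := 1))).symm.trans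
      (Measure.restrict_congr_set (Ioo_ae_eq_Ico (a := (0:ℝ)) (b := 1)))
  rw [Measure.restrict_congr_set (Ioo_ae_eq_Ioc (a := (0:ℝ)) (b := 1))]
  conv_rhs => rw [hR]
  rw [← iUnion_pieces,
    lintegral_iUnion (fun k => by rw [gU_image]; exact measurableSet_Ioc) pieces_disj]
  have key : ∀ k : ℕ, ∫⁻ a in gU k '' Set.Ico 0 1, ENNReal.ofReal (gW a) * (F a * G (gaussMap a)) =
      ∫⁻ y in Set.Ico (0:ℝ) 1, ENNReal.ofReal (gW y) *
        (ENNReal.ofReal (gP k y) * F (gU k y) * G y) := by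
    intro k
    rw [lintegral_image_eq_lintegral_abs_deriv_mul (f' := fun y => -(1 / ((k:ℝ) + 1 + y)^2))
      measurableSet_Ico]
    · refine setLIntegral_congr_fun measurableSet_Ico (fun y hy => ?_)
      rw [gauss_gU k hy, ← mul_assoc, ← ENNReal.ofReal_mul (abs_nonneg _), gW_gU k hy.1,
        ENNReal.ofReal_mul]
      · ring
      · unfold gW
        have := hy.1
        have := Real.log_pos (show (1:ℝ) < 2 by norm_num)
        positivity
    · intro y hy
      have h1 : (k:ℝ) + 1 + y ≠ 0 := by have := hy.1; positivity
      have := ((hasDerivAt_id y).const_add ((k:ℝ)+1)).inv h1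
      unfold gU
      simp_rw [one_div]
      refine (this.congr_deriv ?_).hasDerivWithinAt
      simp only [id]
      rw [neg_div, one_div]
    · intro a ha b hb hab
      rw [← gauss_gU k ha, hab, gauss_gU k hb]
  simp_rw [key]
  rw [← lintegral_tsum]
  · refine lintegral_congr (fun y => ?_)
    rw [ENNReal.tsum_mul_left, ENNReal.tsum_mul_right]; rfl
  · intro k
    exact (gW_meas.ennreal_ofReal.mul (((gP_meas k).ennreal_ofReal.mul
      (hF.comp (gU_meas k))).mul hG)).aemeasurable

theorem gLE_iter_meas {F : ℝ → ENNReal} (hF : Measurable F) (n : ℕ) : Measurable (gLE^[n] F) := by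
  induction n with
  | zero => exact hF
  | succ n ih => rw [Function.iterate_succ_apply']; exact gLE_meas ih

theorem duality_iter (n : ℕ) : ∀ (F G : ℝ → ENNReal) (_ : Measurable F) (_ : Measurable G),
    ∫⁻ x, F x * G (gaussMap^[n] x) ∂muG = ∫⁻ x, gLE^[n] F x * G x ∂muG := by
  induction n with
  | zero => intro F G _ _; rfl
  | succ n ih =>
    intro F G hF hG
    simp only [Function.iterate_succ_apply]
    have := duality F (fun x => G (gaussMap^[n] x)) hF (hG.comp (gaussMap_meas.iterate n))
    rw [this, ih _ _ (gLE_meas hF) hG]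

theorem gP_nonneg (k : ℕ) {x : ℝ} (hx : 0 ≤ x) : 0 ≤ gP k x := by unfold gP; positivity

theorem gP_hasSum {x : ℝ} (hx : 0 ≤ x) : HasSum (fun k => gP k x) 1 := by
  rw [hasSum_iff_tendsto_nat_of_nonneg (fun k => gP_nonneg k hx)]
  have h : ∀ n : ℕ, ∑ k ∈ Finset.range n, gP k x = 1 - (1+x) * (1 / ((n:ℝ) + (1 + x))) := by
    intro n
    induction n with
    | zero => simp; field_simp; simp
    | succ n ih =>
      rw [Finset.sum_range_succ, ih]
      unfold gP
      push_cast
      have h1 : (n:ℝ) + 1 + x ≠ 0 := by positivity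
      have h2 : (n:ℝ) + 2 + x ≠ 0 := by positivity
      have h3 : (n:ℝ) + (1 + x) ≠ 0 := by positivity
      have h4 : (n:ℝ) + 1 + (1 + x) ≠ 0 := by positivity
      field_simp
      ring
  simp_rw [h]
  have : Tendsto (fun n : ℕ => 1 / ((n:ℝ) + (1 + x))) atTop (nhds 0) := by
    simp_rw [one_div]
    exact tendsto_inv_atTop_zero.comp
      (tendsto_atTop_add_const_right _ _ tendsto_natCast_atTop_atTop)
  simpa using (this.const_mul (1+x)).const_sub 1

theorem muG_prob : IsProbabilityMeasure muG := by
  constructor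
  have h0 : muG Set.univ = ∫⁻ x, 1 ∂muG := by simp
  have hlog := Real.log_pos (show (1:ℝ) < 2 by norm_num)
  have hcont : ContinuousOn gW (Set.uIcc 0 1) := by
    unfold gW
    rw [Set.uIcc_of_le zero_le_one]
    refine continuousOn_const.div (by fun_prop) ?_
    intro x hx
    have := hx.1
    positivity
  have hint : IntervalIntegrable gW volume 0 1 := hcont.intervalIntegrable
  have hI : ∫ x in (0:ℝ)..1, gW x = 1 := by
    rw [intervalIntegral.integral_eq_sub_of_hasDerivAt
      (f := fun x => Real.log (1 + x) / Real.log 2) _ hint]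
    · norm_num; 
    · intro x hx
      rw [Set.uIcc_of_le zero_le_one] at hx
      have h1 : 1 + x ≠ 0 := by have := hx.1; positivity
      have := ((((hasDerivAt_id x).const_add 1).log h1).div_const (Real.log 2))
      refine this.congr_deriv ?_
      unfold gW
      simp only [id]
      field_simp
  rw [h0, lint_muG _ measurable_const]
  simp only [mul_one]
  rw [intervalIntegral.integral_of_le zero_le_one, integral_Ioc_eq_integral_Ioo] at hI
  rw [← ofReal_integral_eq_lintegral_ofReal, hI]
  · simp
  · rw [intervalIntegrable_iff_integrableOn_Ioo_of_le zero_le_one] at hint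
    exact hint
  · refine (ae_restrict_iff' measurableSet_Ioo).2 (ae_of_all _ fun x hx => ?_)
    unfold gW
    have := hx.1
    simp only [Pi.zero_apply]
    positivity

theorem muG_ae_mem : ∀ᵐ x ∂muG, x ∈ Set.Ioo (0:ℝ) 1 := by
  unfold muG
  exact (withDensity_absolutelyContinuous _ _).ae_le (ae_restrict_mem measurableSet_Ioo)

theorem gauss_mp : MeasurePreserving gaussMap muG muG := by
  refine ⟨gaussMap_meas, ?_⟩
  ext s hs
  have h := duality (fun _ => 1) (s.indicator 1) measurable_const
    (measurable_one.indicator hs)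
  have h1 : ∫⁻ x, (fun _ => (1:ENNReal)) x * s.indicator 1 (gaussMap x) ∂muG
      = muG (gaussMap ⁻¹' s) := by
    rw [← lintegral_indicator_one (gaussMap_meas hs)]
    refine lintegral_congr (fun x => ?_)
    simp [Set.indicator, Set.mem_preimage]
    rfl
  have h2 : ∫⁻ x, gLE (fun _ => 1) x * s.indicator 1 x ∂muG = muG s := by
    rw [← lintegral_indicator_one hs]
    refine lintegral_congr_ae ?_
    filter_upwards [muG_ae_mem] with x hx
    unfold gLE
    simp only [mul_one]
    rw [← ENNReal.ofReal_tsum_of_nonneg (fun k => gP_nonneg k hx.1.le)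
      (gP_hasSum hx.1.le).summable, (gP_hasSum hx.1.le).tsum_eq]
    simp
  rw [Measure.map_apply gaussMap_meas hs, ← h1, h, h2]

noncomputable def gL (f : ℝ → ℝ) (x : ℝ) : ℝ := ∑' k : ℕ, gP k x * f (gU k x)

theorem gU_mem (k : ℕ) {x : ℝ} (hx : 0 ≤ x) : gU k x ∈ Set.Ioc (0:ℝ) 1 := by
  unfold gU
  refine ⟨by positivity, ?_⟩
  rw [div_le_one (by positivity)]
  have : (0:ℝ) ≤ k := by positivity
  linarith

theorem gU_anti (k : ℕ) {x y : ℝ} (hx : 0 ≤ x) (hxy : x ≤ y) : gU k y ≤ gU k x := by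
  unfold gU
  exact one_div_le_one_div_of_le (by positivity) (by linarith)

theorem gU_anti' {j k : ℕ} (hjk : j ≤ k) {x : ℝ} (hx : 0 ≤ x) : gU k x ≤ gU j x := by
  unfold gU
  have : (j:ℝ) ≤ k := by exact_mod_cast hjk
  exact one_div_le_one_div_of_le (by positivity) (by linarith)

theorem gP_zero_anti {x y : ℝ} (hx : 0 ≤ x) (hxy : x ≤ y) : gP 0 y ≤ gP 0 x := by
  unfold gP
  have hy := hx.trans hxy
  rw [div_le_div_iff₀ (by positivity) (by positivity)]
  push_cast
  have : 0 ≤ (1+x)*(1+y)*(y-x) := by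
    have : 0 ≤ y - x := by linarith
    positivity
  nlinarith

theorem gP_mono (k : ℕ) {x y : ℝ} (hx : 0 ≤ x) (hxy : x ≤ y) (hy1 : y ≤ 1) :
    gP (k+2) x ≤ gP (k+2) y := by
  unfold gP
  have hy := hx.trans hxy
  rw [div_le_div_iff₀ (by positivity) (by positivity)]
  push_cast
  have hk : (0:ℝ) ≤ k := by positivity
  have h : (1 + y) * (((k:ℝ) + 2 + 1 + x) * (k + 2 + 2 + x)) -
    (1 + x) * (((k:ℝ) + 2 + 1 + y) * (k + 2 + 2 + y)) =
      (y - x) * (((k:ℝ)+2)*(k+3) - (1+x)*(1+y)) := by ring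
  have h2 : (1+x)*(1+y) ≤ 2 * 2 := by
    apply mul_le_mul <;> linarith
  have h3 : 0 ≤ (y - x) * (((k:ℝ)+2)*(k+3) - (1+x)*(1+y)) := by
    apply mul_nonneg (by linarith)
    nlinarith
  linarith

theorem gL_anti {f : ℝ → ℝ} (hf : MonotoneOn f (Set.Ioc 0 1))
    (hs : ∀ x ∈ Set.Icc (0:ℝ) 1, Summable (fun k => gP k x * f (gU k x))) :
    AntitoneOn (gL f) (Set.Icc 0 1) := by
  intro x hx y hy hxy
  set c := f (gU 1 x) with hc
  have e : ∀ z ∈ Set.Icc (0:ℝ) 1, HasSum (fun k => gP k z * (f (gU k z) - c)) (gL f z - c) := by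
    intro z hz
    have := (hs z hz).hasSum.sub ((gP_hasSum hz.1).mul_right c)
    rw [one_mul] at this
    refine this.congr_fun (fun k => ?_)
    ring
  have : gL f y - c ≤ gL f x - c := by
    refine hasSum_le (fun k => ?_) (e y hy) (e x hx)
    calc gP k y * (f (gU k y) - c) ≤ gP k y * (f (gU k x) - c) := by
          apply mul_le_mul_of_nonneg_left _ (gP_nonneg k hy.1)
          have := hf (gU_mem k hy.1) (gU_mem k hx.1) (gU_anti k hx.1 hxy)
          linarith
      _ ≤ gP k x * (f (gU k x) - c) := by
          match k with
          | 0 =>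
            apply mul_le_mul_of_nonneg_right (gP_zero_anti hx.1 hxy)
            have := hf (gU_mem 1 hx.1) (gU_mem 0 hx.1) (gU_anti' (by norm_num) hx.1)
            linarith
          | 1 => simp [hc]
          | k + 2 =>
            apply mul_le_mul_of_nonpos_right (gP_mono k hx.1 hxy hy.2)
            have := hf (gU_mem (k+2) hx.1) (gU_mem 1 hx.1) (gU_anti' (by linarith) hx.1)
            linarith
  linarith

theorem gL_neg (f : ℝ → ℝ) (x : ℝ) : gL (fun y => - f y) x = - gL f x := by
  unfold gL
  rw [← tsum_neg]
  simp

theorem gL_mono {f : ℝ → ℝ} (hf : AntitoneOn f (Set.Ioc 0 1))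
    (hs : ∀ x ∈ Set.Icc (0:ℝ) 1, Summable (fun k => gP k x * f (gU k x))) :
    MonotoneOn (gL f) (Set.Icc 0 1) := by
  have := gL_anti (f := fun y => - f y) hf.neg (fun x hx => by simpa using (hs x hx).neg)
  intro x hx y hy hxy
  have h := this hx hy hxy
  rw [gL_neg, gL_neg] at h
  linarith

theorem gP_summable {f : ℝ → ℝ} {a b : ℝ} (hb : ∀ x ∈ Set.Icc (0:ℝ) 1, f x ∈ Set.Icc a b)
    {x : ℝ} (hx : 0 ≤ x) : Summable (fun k => gP k x * f (gU k x)) := by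
  have : Summable (fun k => gP k x * (f (gU k x) - a)) := by
    refine Summable.of_nonneg_of_le (fun k => ?_) (fun k => ?_)
      ((gP_hasSum hx).summable.mul_right (b - a))
    · apply mul_nonneg (gP_nonneg k hx)
      have := (hb _ (Set.Ioc_subset_Icc_self (gU_mem k hx))).1
      linarith
    · apply mul_le_mul_of_nonneg_left _ (gP_nonneg k hx)
      have := (hb _ (Set.Ioc_subset_Icc_self (gU_mem k hx))).2
      linarith
  refine (this.add ((gP_hasSum hx).summable.mul_right a)).congr (fun k => ?_)
  ring

theorem gL_osc {f : ℝ → ℝ} {D : ℝ} (hb : ∀ x ∈ Set.Icc (0:ℝ) 1, ∀ y ∈ Set.Icc (0:ℝ) 1, f x - f y ≤ D)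
    (hs : ∀ x ∈ Set.Icc (0:ℝ) 1, Summable (fun k => gP k x * f (gU k x))) :
    gL f 0 - gL f 1 ≤ D / 2 := by
  have h0 := (hs 0 (by simp)).hasSum
  have h1 := (hs 1 (by simp)).hasSum
  have h0' := (hasSum_nat_add_iff' 1).2 h0
  have h2 := h0'.sub h1
  have h3 := (((gP_hasSum (zero_le_one (α := ℝ))).div_const 2).mul_right (f 1)).add h2
  have h4 := ((gP_hasSum (zero_le_one (α := ℝ))).div_const 2).mul_right D
  have := hasSum_le (fun k => ?_) h3 h4
  · simp only [Finset.sum_range_one] at this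
    have e1 : gP 0 0 = 1/2 := by unfold gP; norm_num
    have e2 : gU 0 0 = 1 := by unfold gU; norm_num
    rw [e1, e2] at this
    unfold gL
    linarith
  · have e1 : gU (k+1) 0 = gU k 1 := by unfold gU; push_cast; congr 1; ring
    have e2 : gP (k+1) 0 = gP k 1 / 2 := by
      unfold gP; push_cast
      rw [div_div, div_eq_div_iff (by positivity) (by positivity)]; ring
    rw [e1, e2]
    have h5 := hb 1 (by simp) (gU k 1) (Set.Ioc_subset_Icc_self (gU_mem k zero_le_one))
    have h6 := gP_nonneg k (zero_le_one (α := ℝ))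
    nlinarith

def GInv (h : ℝ → ℝ) (D : ℝ) : Prop :=
  (∀ x ∈ Set.Icc (0:ℝ) 1, 0 ≤ h x) ∧ (MonotoneOn h (Set.Icc 0 1) ∨ AntitoneOn h (Set.Icc 0 1)) ∧
  (∀ x ∈ Set.Icc (0:ℝ) 1, ∀ y ∈ Set.Icc (0:ℝ) 1, h x - h y ≤ D)

theorem GInv.summ {h : ℝ → ℝ} {D : ℝ} (H : GInv h D) : ∀ x ∈ Set.Icc (0:ℝ) 1,
    Summable (fun k => gP k x * h (gU k x)) := by
  intro x hx
  refine gP_summable (a := 0) (b := h 0 + D) (fun y hy => ⟨H.1 y hy, ?_⟩) hx.1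
  have := H.2.2 y hy 0 (by simp)
  linarith

theorem gL_nonneg {h : ℝ → ℝ} (hh : ∀ x ∈ Set.Ioc (0:ℝ) 1, 0 ≤ h x) {x : ℝ} (hx : 0 ≤ x) :
    0 ≤ gL h x := tsum_nonneg (fun k => mul_nonneg (gP_nonneg k hx) (hh _ (gU_mem k hx)))

theorem GInv.step {h : ℝ → ℝ} {D : ℝ} (H : GInv h D) : GInv (gL h) (D / 2) := by
  refine ⟨fun x hx => gL_nonneg (fun y hy => H.1 y (Set.Ioc_subset_Icc_self hy)) hx.1, ?_⟩
  have i0 : (0:ℝ) ∈ Set.Icc (0:ℝ) 1 := by simp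
  have i1 : (1:ℝ) ∈ Set.Icc (0:ℝ) 1 := by simp
  have hs := H.summ
  rcases H.2.1 with hm | hm
  · have ha := gL_anti (hm.mono Set.Ioc_subset_Icc_self) hs
    refine ⟨Or.inr ha, fun x hx y hy => ?_⟩
    have := gL_osc H.2.2 hs
    have h1 := ha i0 hx hx.1
    have h2 := ha hy i1 hy.2
    linarith
  · have ha := gL_mono (hm.mono Set.Ioc_subset_Icc_self) hs
    refine ⟨Or.inl ha, fun x hx y hy => ?_⟩
    have := gL_osc (f := fun y => - h y) (D := D)
      (fun x hx y hy => by have := H.2.2 y hy x hx; linarith)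
      (fun x hx => by simpa using (hs x hx).neg)
    rw [gL_neg, gL_neg] at this
    have h1 := ha hx i1 hx.2
    have h2 := ha i0 hy hy.1
    linarith

theorem gLE_eq {F : ℝ → ENNReal} {h : ℝ → ℝ} (h0 : ∀ x ∈ Set.Ioc (0:ℝ) 1, 0 ≤ h x)
    (hF : ∀ x ∈ Set.Ioc (0:ℝ) 1, F x = ENNReal.ofReal (h x)) {x : ℝ} (hx : x ∈ Set.Icc (0:ℝ) 1)
    (hs : Summable (fun k => gP k x * h (gU k x))) :
    gLE F x = ENNReal.ofReal (gL h x) := by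
  unfold gLE gL
  rw [ENNReal.ofReal_tsum_of_nonneg
    (fun k => mul_nonneg (gP_nonneg k hx.1) (h0 _ (gU_mem k hx.1))) hs]
  refine tsum_congr (fun k => ?_)
  rw [hF _ (gU_mem k hx.1), ENNReal.ofReal_mul (gP_nonneg k hx.1)]

noncomputable def gF (x : ℝ) : ℝ := |Real.log x|

theorem gF_anti : AntitoneOn gF (Set.Ioc 0 1) := by
  intro x hx y hy hxy
  unfold gF
  rw [abs_of_nonpos (Real.log_nonpos hx.1.le hx.2), abs_of_nonpos (Real.log_nonpos hy.1.le hy.2)]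
  have := Real.log_le_log hx.1 hxy
  linarith

theorem gF_le {x : ℝ} (hx : x ∈ Set.Ioc (0:ℝ) 1) : gF x ≤ 4 * x ^ (-(1/4):ℝ) := by
  have := (Real.abs_log_mul_self_rpow_lt x (1/4) hx.1 hx.2 (by norm_num)).le
  have hp : 0 < x ^ (1/4:ℝ) := Real.rpow_pos_of_pos hx.1 _
  rw [abs_mul, abs_of_pos hp] at this
  rw [Real.rpow_neg hx.1.le, ← div_eq_mul_inv, le_div_iff₀ hp]
  unfold gF
  linarith

theorem gF_summ : ∀ x ∈ Set.Icc (0:ℝ) 1, Summable (fun k => gP k x * gF (gU k x)) := by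
  intro x hx
  have hs : Summable (fun k : ℕ => 16 * (1 / ((k:ℝ) + 1) ^ (3/2:ℝ))) := by
    apply Summable.mul_left
    have := (summable_nat_add_iff 1).2
      (Real.summable_one_div_nat_rpow.2 (by norm_num : (1:ℝ) < 3/2))
    simpa using this
  refine Summable.of_nonneg_of_le
    (fun k => mul_nonneg (gP_nonneg k hx.1) (abs_nonneg _)) (fun k => ?_) hs
  have h1 : gP k x ≤ 2 * (1 / ((k:ℝ)+1)^2) := by
    unfold gP
    rw [← mul_div_assoc, mul_one]
    have := hx.1
    have := hx.2
    apply div_le_div₀ (by norm_num) (by linarith) (by positivity)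
    rw [sq]
    apply mul_le_mul <;> first | positivity | linarith
  have h2 : gF (gU k x) ≤ 8 * ((k:ℝ)+1)^(1/2:ℝ) := by
    refine (gF_le (gU_mem k hx.1)).trans ?_
    have h3 : 0 ≤ (k:ℝ) + 1 + x := by have := hx.1; positivity
    unfold gU
    rw [one_div, Real.inv_rpow h3, Real.rpow_neg h3, inv_inv]
    have hk : (0:ℝ) ≤ k := by positivity
    have h4 : (k:ℝ) + 1 + x ≤ (2 * (k+1)) := by linarith [hx.2]
    have h5 : ((k:ℝ) + 1 + x)^(1/4:ℝ) ≤ (2 * ((k:ℝ)+1))^(1/4:ℝ) :=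
      Real.rpow_le_rpow h3 h4 (by norm_num)
    rw [Real.mul_rpow (by norm_num) (by positivity)] at h5
    have h6 : (2:ℝ)^(1/4:ℝ) ≤ 2 := by
      have := Real.rpow_le_rpow_of_exponent_le (x := 2) (by norm_num) (by norm_num : (1/4:ℝ) ≤ 1)
      simpa using this
    have h7 : ((k:ℝ)+1)^(1/4:ℝ) ≤ ((k:ℝ)+1)^(1/2:ℝ) :=
      Real.rpow_le_rpow_of_exponent_le (by linarith) (by norm_num)
    have h8 : (2:ℝ)^(1/4:ℝ) * ((k:ℝ)+1)^(1/4:ℝ) ≤ 2 * ((k:ℝ)+1)^(1/2:ℝ) :=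
      mul_le_mul h6 h7 (by positivity) (by norm_num)
    linarith
  calc gP k x * gF (gU k x) ≤ (2 * (1 / ((k:ℝ)+1)^2)) * (8 * ((k:ℝ)+1)^(1/2:ℝ)) :=
        mul_le_mul h1 h2 (abs_nonneg _) (by positivity)
    _ = _ := by
      have hp : (0:ℝ) < (k:ℝ) + 1 := by positivity
      have : ((k:ℝ)+1)^2 = ((k:ℝ)+1)^(1/2:ℝ) * ((k:ℝ)+1)^(3/2:ℝ) := by
        rw [← Real.rpow_add hp, ← Real.rpow_natCast]; norm_num
      rw [this]
      have h1 : ((k:ℝ)+1)^(1/2:ℝ) ≠ 0 := by positivity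
      have h2 : ((k:ℝ)+1)^(3/2:ℝ) ≠ 0 := by positivity
      field_simp
      norm_num

theorem gF_inv : ∃ D : ℝ, 0 ≤ D ∧ ∀ n : ℕ, GInv (gL^[n+1] gF) (D / 2 ^ n) := by
  have hm := gL_mono gF_anti gF_summ
  have i0 : (0:ℝ) ∈ Set.Icc (0:ℝ) 1 := by simp
  have i1 : (1:ℝ) ∈ Set.Icc (0:ℝ) 1 := by simp
  refine ⟨gL gF 1 - gL gF 0, by linarith [hm i0 i1 zero_le_one], fun n => ?_⟩
  induction n with
  | zero =>
    refine ⟨fun x hx => gL_nonneg (fun y hy => abs_nonneg _) hx.1, Or.inl hm, fun x hx y hy => ?_⟩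
    have h1 := hm hx i1 hx.2
    have h2 := hm i0 hy hy.1
    simp only [zero_add, Function.iterate_one, pow_zero, div_one]
    linarith
  | succ n ih =>
    rw [Function.iterate_succ_apply', pow_succ, ← div_div]
    exact ih.step

theorem gLE_iter (n : ℕ) : ∀ x ∈ Set.Icc (0:ℝ) 1,
    gLE^[n+1] (fun x => ENNReal.ofReal (gF x)) x = ENNReal.ofReal (gL^[n+1] gF x) := by
  obtain ⟨D, hD, hI⟩ := gF_inv
  induction n with
  | zero =>
    intro x hx
    exact gLE_eq (fun x _ => abs_nonneg _) (fun _ _ => rfl) hx (gF_summ x hx)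
  | succ n ih =>
    intro x hx
    rw [Function.iterate_succ_apply' gLE, Function.iterate_succ_apply' gL]
    exact gLE_eq (fun x hx => (hI n).1 x (Set.Ioc_subset_Icc_self hx))
      (fun x hx => ih x (Set.Ioc_subset_Icc_self hx)) hx ((hI n).summ x hx)

theorem gF_meas : Measurable gF := by unfold gF; fun_prop

theorem muG_le : muG ≤ ENNReal.ofReal (1 / Real.log 2) • volume.restrict (Set.Ioo (0:ℝ) 1) := by
  unfold muG
  rw [← withDensity_const]
  refine withDensity_mono ?_
  refine (ae_restrict_iff' measurableSet_Ioo).2 (ae_of_all _ fun x hx => ?_)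
  apply ENNReal.ofReal_le_ofReal
  unfold gW
  have hlog := Real.log_pos (show (1:ℝ) < 2 by norm_num)
  apply one_div_le_one_div_of_le hlog
  nlinarith [hx.1]

theorem gF_sq_int : IntegrableOn (fun x => gF x ^ 2) (Set.Ioo (0:ℝ) 1) := by
  have h := (intervalIntegral.intervalIntegrable_rpow' (a := 0) (b := 1)
    (r := -(1/2)) (by norm_num)).const_mul 16
  rw [intervalIntegrable_iff_integrableOn_Ioo_of_le zero_le_one] at h
  refine Integrable.mono' h (gF_meas.pow_const 2).aestronglyMeasurable ?_
  refine (ae_restrict_iff' measurableSet_Ioo).2 (ae_of_all _ fun x hx => ?_)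
  have h1 := gF_le (Set.Ioo_subset_Ioc_self hx)
  have h0 : 0 ≤ gF x := abs_nonneg _
  rw [Real.norm_of_nonneg (by positivity)]
  calc gF x ^ 2 ≤ (4 * x ^ (-(1/4):ℝ))^2 := by gcongr
    _ = _ := by
      rw [mul_pow, sq (x ^ (-(1/4):ℝ)), ← Real.rpow_add hx.1]; norm_num

theorem gF_memLp : MemLp gF 2 muG := by
  rw [memLp_two_iff_integrable_sq gF_meas.aestronglyMeasurable]
  exact (Integrable.smul_measure gF_sq_int ENNReal.ofReal_ne_top).mono_measure muG_le

theorem gF_cov : ∃ C : ℝ, 0 ≤ C ∧ ∀ n, ∫ x, gF x * gF (gaussMap^[n] x) ∂muG ≤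
    (∫ x, gF x ∂muG) ^ 2 + C * (1/2) ^ n := by
  have := muG_prob
  obtain ⟨D, hD, hI⟩ := gF_inv
  set m := ∫ x, gF x ∂muG with hm
  have hF0 : ∀ x, 0 ≤ gF x := fun x => abs_nonneg _
  have hm0 : 0 ≤ m := integral_nonneg hF0
  have hint : Integrable gF muG := gF_memLp.integrable (by norm_num)
  have hml : ∫⁻ x, ENNReal.ofReal (gF x) ∂muG = ENNReal.ofReal m :=
    (ofReal_integral_eq_lintegral_ofReal hint (ae_of_all _ hF0)).symm
  have hFm : Measurable (fun x => ENNReal.ofReal (gF x)) := gF_meas.ennreal_ofReal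
  have hQ : 0 ≤ ∫ x, gF x * gF x ∂muG := integral_nonneg (fun x => mul_nonneg (hF0 x) (hF0 x))
  refine ⟨2 * D * m + ∫ x, gF x * gF x ∂muG, by positivity, fun n => ?_⟩
  match n with
  | 0 =>
    simp only [Function.iterate_zero, id, pow_zero, mul_one]
    nlinarith [mul_nonneg hD hm0]
  | n + 1 =>
    have hb : ∀ x ∈ Set.Icc (0:ℝ) 1, gL^[n+1] gF x ≤ m + D / 2 ^ n := by
      intro x hx
      have h1 := duality_iter (n+1) _ (fun _ => 1) hFm measurable_const
      simp only [mul_one] at h1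
      rw [hml] at h1
      have h2 : ENNReal.ofReal (gL^[n+1] gF x - D / 2 ^ n) ≤ ENNReal.ofReal m := by
        rw [h1]
        calc ENNReal.ofReal (gL^[n+1] gF x - D / 2 ^ n)
            = ∫⁻ _, ENNReal.ofReal (gL^[n+1] gF x - D / 2 ^ n) ∂muG := by simp
          _ ≤ _ := by
            refine lintegral_mono_ae ?_
            filter_upwards [muG_ae_mem] with y hy
            rw [gLE_iter n y (Set.Ioo_subset_Icc_self hy)]
            apply ENNReal.ofReal_le_ofReal
            have := (hI n).2.2 x hx y (Set.Ioo_subset_Icc_self hy)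
            linarith
      have := (ENNReal.ofReal_le_ofReal_iff hm0).1 h2
      linarith
    have h1 := duality_iter (n+1) _ _ hFm hFm
    have hD2 : 0 ≤ D / 2 ^ n := by positivity
    have h2 : ∫⁻ x, ENNReal.ofReal (gF x * gF (gaussMap^[n+1] x)) ∂muG
        ≤ ENNReal.ofReal ((m + D / 2 ^ n) * m) := by
      simp_rw [ENNReal.ofReal_mul (hF0 _)]
      rw [h1, ENNReal.ofReal_mul (by positivity), ← hml, ← lintegral_const_mul _ hFm]
      refine lintegral_mono_ae ?_
      filter_upwards [muG_ae_mem] with y hy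
      rw [gLE_iter n y (Set.Ioo_subset_Icc_self hy)]
      gcongr
      exact hb y (Set.Ioo_subset_Icc_self hy)
    have hi : Integrable (fun x => gF x * gF (gaussMap^[n+1] x)) muG :=
      gF_memLp.integrable_mul (gF_memLp.comp_measurePreserving (gauss_mp.iterate (n+1)))
    rw [← ofReal_integral_eq_lintegral_ofReal hi
      (ae_of_all _ fun x => mul_nonneg (hF0 _) (hF0 _))] at h2
    have h3 := (ENNReal.ofReal_le_ofReal_iff (by positivity)).1 h2
    have h4 : D / 2 ^ n = 2 * D * (1/2)^(n+1) := by
      rw [pow_succ, one_div, inv_pow]; field_simp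
    have h5 : 0 ≤ (∫ x, gF x * gF x ∂muG) * (1/2)^(n+1) := by positivity
    rw [h4] at h3
    nlinarith

theorem int_pow_log (n : ℕ) : IntegrableOn (fun x : ℝ => x ^ n * (-Real.log x)) (Set.Ioc 0 1) ∧
    ∫ x in Set.Ioc (0:ℝ) 1, x ^ n * (-Real.log x) = 1 / ((n:ℝ)+1)^2 := by
  have hi : IntervalIntegrable (fun x : ℝ => x ^ n * (-Real.log x)) volume 0 1 :=
    (intervalIntegral.intervalIntegrable_log').neg.continuousOn_mul (by fun_prop)
  refine ⟨(intervalIntegrable_iff_integrableOn_Ioc_of_le zero_le_one).1 hi, ?_⟩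
  rw [← intervalIntegral.integral_of_le zero_le_one]
  have hn : (n:ℝ) + 1 ≠ 0 := by positivity
  rw [intervalIntegral.integral_eq_sub_of_hasDerivAt_of_le zero_le_one
    (f := fun x => x^n * (- (x * Real.log x)) / (n+1) + x^(n+1) / ((n:ℝ)+1)^2) _ _ hi]
  · simp
  · have : Continuous (fun x : ℝ => x * Real.log x) := Real.continuous_mul_log
    fun_prop
  · intro x hx
    have hx0 : x ≠ 0 := hx.1.ne'
    have h1 := (((hasDerivAt_pow (n+1) x).mul (Real.hasDerivAt_log hx0)).neg.div_const ((n:ℝ)+1)).add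
      ((hasDerivAt_pow (n+1) x).div_const (((n:ℝ)+1)^2))
    have h2 := h1.congr_of_eventuallyEq (f₁ := fun x => x^n * (- (x * Real.log x)) / (n+1)
      + x^(n+1) / ((n:ℝ)+1)^2) (Filter.Eventually.of_forall (fun y => by
        simp [pow_succ]; ring))
    refine h2.congr_deriv ?_
    push_cast
    field_simp
    ring

theorem alt_sum : HasSum (fun n : ℕ => (-1:ℝ)^n * (1 / ((n:ℝ)+1)^2)) (Real.pi^2/12) := by
  have h := hasSum_zeta_two
  have h1 : HasSum (fun n : ℕ => 1 / ((n:ℝ)+1)^2) (Real.pi^2/6) := by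
    have := (hasSum_nat_add_iff' 1).2 h
    simpa using this
  have hodd : HasSum (fun n : ℕ => 1 / (((2*n+1 : ℕ):ℝ)+1)^2) (Real.pi^2/24) := by
    have := h1.mul_left (1/4)
    have e : (1/4:ℝ) * (Real.pi^2/6) = Real.pi^2/24 := by ring
    rw [e] at this
    refine this.congr_fun (fun n => ?_)
    push_cast
    have : (n:ℝ) + 1 ≠ 0 := by positivity
    have h2 : (2 * (n:ℝ) + 1 + 1) = 2 * (n+1) := by ring
    rw [h2]; field_simp; norm_num
  have hs : Summable (fun n : ℕ => 1 / (((2*n : ℕ):ℝ)+1)^2) :=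
    h1.summable.comp_injective (i := fun n : ℕ => 2 * n) (fun a b h => by simpa using h)
  have h2 := hs.hasSum.even_add_odd (f := fun n : ℕ => 1 / ((n:ℝ)+1)^2) hodd
  have h3 := h2.unique h1
  have he : HasSum (fun n : ℕ => 1 / (((2*n : ℕ):ℝ)+1)^2) (Real.pi^2/8) := by
    convert hs.hasSum using 1; linarith
  have h4 := HasSum.even_add_odd (f := fun n : ℕ => (-1:ℝ)^n * (1 / ((n:ℝ)+1)^2))
    (m := Real.pi^2/8) (m' := -(Real.pi^2/24)) (by simpa [pow_mul] using he)
    (by simpa [pow_mul, pow_succ] using hodd.neg)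
  convert h4 using 1; ring

theorem gF_int : ∫ x, gF x ∂muG = Real.pi^2 / (12 * Real.log 2) := by
  have hlog := Real.log_pos (show (1:ℝ) < 2 by norm_num)
  have h1 : ∫ x, gF x ∂muG = ∫ x in Set.Ioo (0:ℝ) 1, gW x * gF x := by
    unfold muG
    rw [integral_withDensity_eq_integral_toReal_smul gW_meas.ennreal_ofReal
      (ae_of_all _ fun x => ENNReal.ofReal_lt_top)]
    refine setIntegral_congr_fun measurableSet_Ioo (fun x hx => ?_)
    have : 0 ≤ gW x := by unfold gW; have := hx.1; positivity
    simp only [ENNReal.toReal_ofReal this, smul_eq_mul]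
  have h2 := hasSum_integral_of_summable_integral_norm (μ := volume.restrict (Set.Ioc (0:ℝ) 1))
    (F := fun (n : ℕ) (x : ℝ) => (-1)^n * (x^n * (-Real.log x)))
    (fun n => (int_pow_log n).1.const_mul _) (by
      have : (fun n : ℕ => ∫ x in Set.Ioc (0:ℝ) 1, ‖(-1)^n * (x^n * (-Real.log x))‖)
          = fun n : ℕ => 1 / ((n:ℝ)+1)^2 := by
        ext n
        rw [← (int_pow_log n).2]
        refine setIntegral_congr_fun measurableSet_Ioc (fun x hx => ?_)
        have h3 : 0 ≤ -Real.log x := by linarith [Real.log_nonpos hx.1.le hx.2]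
        have h4 := hx.1.le
        simp only [norm_mul, norm_pow, norm_neg, norm_one, one_pow, one_mul]
        rw [Real.norm_of_nonneg h4, ← norm_neg, Real.norm_of_nonneg h3]
      rw [this]
      have := (summable_nat_add_iff 1).2 (Real.summable_one_div_nat_pow.2 (by norm_num : 1 < 2))
      simpa using this)
  simp_rw [integral_const_mul, (int_pow_log _).2] at h2
  have h3 := h2.unique alt_sum
  rw [h1]
  have h4 : ∫ x in Set.Ioo (0:ℝ) 1, gW x * gF x = (1 / Real.log 2) * (Real.pi^2/12) := by
    rw [← h3, integral_Ioc_eq_integral_Ioo, ← integral_const_mul]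
    refine setIntegral_congr_fun measurableSet_Ioo (fun x hx => ?_)
    have hg := hasSum_geometric_of_abs_lt_one (r := -x) (by rw [abs_neg, abs_of_pos hx.1]; exact hx.2)
    have h5 := (hg.mul_right (-Real.log x)).tsum_eq
    have h6 : ∀ n : ℕ, (-1)^n * (x^n * (-Real.log x)) = (-x)^n * (-Real.log x) := by
      intro n; rw [neg_pow x n]; ring
    simp only [h6]
    rw [h5]
    unfold gW gF
    rw [abs_of_nonpos (Real.log_nonpos hx.1.le hx.2.le)]
    have : 1 + x ≠ 0 := by have := hx.1; positivity
    have : 1 - -x ≠ 0 := by have := hx.1; rw [sub_neg_eq_add]; positivity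
    field_simp
    ring
  rw [h4]
  field_simp

theorem irr_iter {x : ℝ} (hx : Irrational x) (h01 : x ∈ Set.Ioo (0:ℝ) 1) (n : ℕ) :
    Irrational (gaussMap^[n] x) ∧ gaussMap^[n] x ∈ Set.Ioo (0:ℝ) 1 := by
  induction n with
  | zero => exact ⟨hx, h01⟩
  | succ n ih =>
    rw [Function.iterate_succ_apply']
    set y := gaussMap^[n] x
    have h1 : Irrational (gaussMap y) := by
      unfold gaussMap
      rw [one_div]
      exact ih.1.inv.sub_intCast _
    refine ⟨h1, lt_of_le_of_ne ?_ ?_, ?_⟩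
    · exact Int.fract_nonneg (1/y)
    · exact h1.ne_zero.symm
    · exact Int.fract_lt_one (1/y)

theorem gauss_deriv {y : ℝ} (hy : Irrational y) : HasDerivAt gaussMap (-(1/y^2)) y := by
  have h0 := hy.ne_zero
  have h1 : HasDerivAt (fun z : ℝ => 1 / z - (⌊1/y⌋ : ℝ)) (-(1/y^2)) y := by
    simp_rw [one_div]
    exact (hasDerivAt_inv h0).sub_const _
  refine h1.congr_of_eventuallyEq ?_
  have hc : ContinuousAt (fun z : ℝ => 1 / z) y := by
    simp_rw [one_div]
    exact continuousAt_inv₀ h0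
  have hi : Irrational (1/y) := by rw [one_div]; exact hy.inv
  have hm : Set.Ioo (⌊1/y⌋ : ℝ) (⌊1/y⌋ + 1) ∈ nhds (1/y) := by
    apply Ioo_mem_nhds
    · exact lt_of_le_of_ne (Int.floor_le _) (hi.ne_int _).symm
    · exact Int.lt_floor_add_one _
  filter_upwards [hc.preimage_mem_nhds hm] with z hz
  unfold gaussMap
  have : ⌊1/z⌋ = ⌊1/y⌋ := Int.floor_eq_iff.2 ⟨hz.1.le, hz.2⟩
  rw [this]

theorem log_deriv_iter {x : ℝ} (hx : Irrational x) (h01 : x ∈ Set.Ioo (0:ℝ) 1) (n : ℕ) :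
    ∃ d, HasDerivAt (gaussMap^[n]) d x ∧ d ≠ 0 ∧ Real.log |d| = 2 * birkhoffSum gaussMap gF n x := by
  induction n with
  | zero => exact ⟨1, hasDerivAt_id x, one_ne_zero, by simp⟩
  | succ n ih =>
    obtain ⟨d, h1, h2, h3⟩ := ih
    obtain ⟨hi, hp, hl⟩ := irr_iter hx h01 n
    set y := gaussMap^[n] x with hy
    have h4 : HasDerivAt gaussMap (-(1/y^2)) (gaussMap^[n] x) := gauss_deriv hi
    have hy2 : -(1/y^2) ≠ 0 := by
      rw [neg_ne_zero]; positivity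
    refine ⟨-(1/y^2) * d, ?_, mul_ne_zero hy2 h2, ?_⟩
    · rw [Function.iterate_succ']
      exact h4.comp x h1
    · rw [abs_mul, Real.log_mul (abs_ne_zero.2 hy2) (abs_ne_zero.2 h2), h3, birkhoffSum_succ, ← hy]
      rw [abs_neg, abs_of_nonneg (by positivity), one_div, Real.log_inv, Real.log_pow]
      unfold gF
      rw [abs_of_nonpos (Real.log_nonpos hp.le hl.le)]
      push_cast; ring

theorem cf_step {x : ℝ} (n : ℕ) :
    1 / (gaussMap^[n] x) = cfDigit x n + gaussMap^[n+1] x := by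
  rw [Function.iterate_succ_apply']
  unfold cfDigit
  conv_rhs => rw [gaussMap]
  ring

theorem digit_pos {x : ℝ} (hx : Irrational x) (h01 : x ∈ Set.Ioo (0:ℝ) 1) (n : ℕ) :
    1 ≤ cfDigit x n := by
  obtain ⟨hi, hp, hl⟩ := irr_iter hx h01 n
  unfold cfDigit
  rw [Int.le_floor]
  push_cast
  rw [le_div_iff₀ hp]; linarith

theorem cfQ_prop {x : ℝ} (hx : Irrational x) (h01 : x ∈ Set.Ioo (0:ℝ) 1) (n : ℕ) :
    1 ≤ cfQ x n ∧ cfQ x n ≤ cfQ x (n+1) ∧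
    birkhoffSum gaussMap gF (n+1) x =
      Real.log ((cfQ x (n+1) : ℝ) + cfQ x n * gaussMap^[n+1] x) := by
  induction n with
  | zero =>
    have hd := digit_pos hx h01 0
    refine ⟨le_refl _, hd, ?_⟩
    have := cf_step (x := x) 0
    simp only [cfQ, Int.cast_one, one_mul]
    rw [← this]
    simp only [zero_add, birkhoffSum_one', Function.iterate_zero, id]
    unfold gF
    rw [abs_of_nonpos (Real.log_nonpos h01.1.le h01.2.le), one_div, Real.log_inv]
  | succ n ih =>
    obtain ⟨h1, h2, h3⟩ := ih
    have hd := digit_pos hx h01 (n+1)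
    have h4 : cfQ x (n+2) = cfDigit x (n+1) * cfQ x (n+1) + cfQ x n := by rw [cfQ]
    refine ⟨h1.trans h2, ?_, ?_⟩
    · rw [h4]; nlinarith
    · obtain ⟨hi, hp, hl⟩ := irr_iter hx h01 (n+1)
      rw [birkhoffSum_succ, h3, h4]
      have h5 := cf_step (x := x) (n+1)
      have e : gF (gaussMap^[n+1] x) = Real.log (1 / gaussMap^[n+1] x) := by
        unfold gF
        rw [abs_of_nonpos (Real.log_nonpos hp.le hl.le), one_div, Real.log_inv]
      have hq1 : (1:ℝ) ≤ cfQ x n := by exact_mod_cast h1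
      have hq2 : (1:ℝ) ≤ cfQ x (n+1) := by exact_mod_cast h1.trans h2
      rw [e, ← Real.log_mul (by positivity) (by positivity)]
      congr 1
      have h6 : gaussMap^[n+1+1] x = 1 / gaussMap^[n+1] x - cfDigit x (n+1) := by linarith
      rw [h6]
      push_cast
      field_simp
      ring

theorem vol_ac : volume.restrict (Set.Ioo (0:ℝ) 1) ≪ muG := by
  unfold muG
  refine withDensity_absolutelyContinuous' gW_meas.ennreal_ofReal.aemeasurable ?_
  refine (ae_restrict_iff' measurableSet_Ioo).2 (ae_of_all _ fun x hx => ?_)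
  have hlog := Real.log_pos (show (1:ℝ) < 2 by norm_num)
  have : 0 < gW x := by unfold gW; have := hx.1; positivity
  simpa using this

theorem ae_irr : ∀ᵐ x ∂(volume : Measure ℝ), Irrational x := by
  have : (Set.range ((↑) : ℚ → ℝ)).Countable := Set.countable_range _
  exact this.ae_notMem volume

/-- for Lebesgue-almost every `x ∈ (0,1)` the Lyapunov exponent of the Gauss
shift exists and equals `π²/(6 log 2)`; equivalently `(1/n) log qₙ(x) → π²/(12 log 2)`. -/
theorem stmt3 :
    ∀ᵐ x ∂(volume.restrict (Set.Ioo (0 : ℝ) 1)),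
      Tendsto (fun n : ℕ => (1 / (n : ℝ)) * Real.log |deriv (gaussMap^[n]) x|)
        atTop (nhds (Real.pi ^ 2 / (6 * Real.log 2))) ∧
      Tendsto (fun n : ℕ => (1 / (n : ℝ)) * Real.log (cfQ x n : ℝ))
        atTop (nhds (Real.pi ^ 2 / (12 * Real.log 2))) := by
  have := muG_prob
  obtain ⟨C, hC, hcov⟩ := gF_cov
  have hmain := abs_birk muG gaussMap gauss_mp gF (fun x => abs_nonneg _) gF_memLp _ C rfl hC hcov
  rw [gF_int] at hmain
  filter_upwards [vol_ac.ae_le hmain, ae_restrict_mem measurableSet_Ioo,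
    ae_restrict_of_ae ae_irr] with x hb h01 hx
  constructor
  · have h := hb.const_mul 2
    have e : 2 * (Real.pi ^ 2 / (12 * Real.log 2)) = Real.pi ^ 2 / (6 * Real.log 2) := by
      have hlog := Real.log_pos (show (1:ℝ) < 2 by norm_num)
      field_simp; norm_num
    rw [e] at h
    refine h.congr (fun n => ?_)
    obtain ⟨d, h1, -, h3⟩ := log_deriv_iter hx h01 n
    rw [h1.deriv, h3]; ring
  · have hz : Tendsto (fun n : ℕ => Real.log 2 / (n:ℝ)) atTop (nhds 0) :=
      tendsto_const_div_atTop_nhds_zero_nat _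
    have hlow := hb.sub hz
    rw [sub_zero] at hlow
    have key : ∀ n : ℕ, 1 ≤ n → Real.log (cfQ x n : ℝ) ≤ birkhoffSum gaussMap gF n x ∧
        birkhoffSum gaussMap gF n x ≤ Real.log (cfQ x n : ℝ) + Real.log 2 := by
      intro n hn
      obtain ⟨k, rfl⟩ := Nat.exists_eq_add_of_le' hn
      obtain ⟨h1, h2, h3⟩ := cfQ_prop hx h01 k
      obtain ⟨hi, hp, hl⟩ := irr_iter hx h01 (k+1)
      have hq1 : (1:ℝ) ≤ cfQ x k := by exact_mod_cast h1
      have hq2 : (cfQ x k : ℝ) ≤ cfQ x (k+1) := by exact_mod_cast h2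
      have hq3 : (0:ℝ) < cfQ x (k+1) := by linarith
      rw [h3, ← Real.log_mul (by positivity) (by norm_num)]
      constructor
      · apply Real.log_le_log hq3
        have : 0 ≤ (cfQ x k : ℝ) * gaussMap^[k+1] x := by positivity
        linarith
      · apply Real.log_le_log (by positivity)
        nlinarith
    refine tendsto_of_tendsto_of_tendsto_of_le_of_le' hlow hb ?_ ?_
    · filter_upwards [eventually_ge_atTop 1] with n hn
      rw [← sub_div, one_div, inv_mul_eq_div]
      have := (key n hn).2
      gcongr
      linarith
    · filter_upwards [eventually_ge_atTop 1] with n hn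
      rw [one_div, inv_mul_eq_div]
      have := (key n hn).1
      gcongr
end

section
/- For every integer n ≥ 1, the set { m ∈ M₂(ℤ) : det m = n } of 2×2 integer matrices of determinant n decomposes into exactly σ(n) = Σ_{d|n} d orbits under left multiplication by SL(2,ℤ). (This computes the partition function of the GL₂-system: Σ_{m ∈ Γ\M₂⁺(ℤ)} det(m)^{−β} = Σ_{k≥1} σ(k) k^{−β} = ζ(β)ζ(β−1).) -/
set_option synthInstance.maxHeartbeats 1000000
set_option maxHeartbeats 1000000

def myRel (n : ℕ) (a b : {m : Matrix (Fin 2) (Fin 2) ℤ // m.det = (n : ℤ)}) : Prop :=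
  ∃ g : Matrix.SpecialLinearGroup (Fin 2) ℤ,
        (g : Matrix (Fin 2) (Fin 2) ℤ) * a.1 = b.1

theorem myRel_equiv (n : ℕ) : Equivalence (myRel n) where
  refl a := ⟨1, by simp⟩
  symm := by
    rintro a b ⟨g, h⟩
    refine ⟨g⁻¹, ?_⟩
    rw [← h, ← Matrix.mul_assoc, ← Matrix.SpecialLinearGroup.coe_mul]
    simp
  trans := by
    rintro a b c ⟨g, h⟩ ⟨k, h'⟩
    exact ⟨k * g, by rw [← h', ← h, Matrix.SpecialLinearGroup.coe_mul, Matrix.mul_assoc]⟩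

def myRep (n : ℕ) (x : (d : n.divisors) × Fin d.1) :
    {m : Matrix (Fin 2) (Fin 2) ℤ // m.det = (n : ℤ)} :=
  ⟨!![((n / x.1.1 : ℕ) : ℤ), ((x.2 : ℕ) : ℤ); 0, ((x.1.1 : ℕ) : ℤ)], by
    rw [Matrix.det_fin_two_of, mul_zero, sub_zero]
    exact_mod_cast Nat.div_mul_cancel (Nat.dvd_of_mem_divisors x.1.2)⟩

theorem myRep_inj (n : ℕ) (x y : (d : n.divisors) × Fin d.1)
    (h : myRel n (myRep n x) (myRep n y)) : x = y := by
  obtain ⟨⟨d, hd⟩, b, hb⟩ := x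
  obtain ⟨⟨e, he⟩, c, hc⟩ := y
  obtain ⟨g, h⟩ := h
  have hg := g.2
  rw [Matrix.det_fin_two] at hg
  have h00 := congrFun₂ h 0 0
  have h01 := congrFun₂ h 0 1
  have h10 := congrFun₂ h 1 0
  have h11 := congrFun₂ h 1 1
  simp only [myRep, Matrix.mul_apply, Fin.sum_univ_two, Matrix.of_apply, Matrix.cons_val', 
    Matrix.cons_val_zero, Matrix.cons_val_one, Matrix.cons_val_fin_one, mul_zero, add_zero]
    at h00 h01 h10 h11
  have pos : ∀ k ∈ n.divisors, (0:ℤ) < ((n / k : ℕ) : ℤ) := fun k hk => by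
    exact_mod_cast Nat.div_pos (Nat.divisor_le hk) (Nat.pos_of_mem_divisors hk)
  have p1 := pos d hd
  have p2 := pos e he
  simp only at hb hc
  generalize ((n / d : ℕ) : ℤ) = u at *
  generalize ((n / e : ℕ) : ℤ) = v at *
  generalize g.1 0 0 = p at *
  generalize g.1 0 1 = q at *
  generalize g.1 1 0 = r at *
  generalize g.1 1 1 = s at *
  have hr : r = 0 := by
    rcases mul_eq_zero.mp h10 with h | h
    · exact h
    · omega
  subst hr
  have hp : p = 1 := by
    have h1 : p * s = 1 := by linarith
    rcases Int.mul_eq_one_iff_eq_one_or_neg_one.mp h1 with h | h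
    · exact h.1
    · rw [h.1] at h00; omega
  subst hp
  have hs : s = 1 := by linarith
  subst hs
  have hde : d = e := by
    have : (d : ℤ) = e := by linarith
    exact_mod_cast this
  subst hde
  have hq : q = 0 := by
    have : q * d < 1 * d := by push_cast at *; linarith [(Int.ofNat_lt.2 hc), (Int.natCast_nonneg b)]
    have h2 : (-1) * d < q * d := by linarith [(Int.ofNat_lt.2 hb), (Int.natCast_nonneg c)]
    have := lt_of_mul_lt_mul_right this (Int.natCast_nonneg d)
    have := lt_of_mul_lt_mul_right h2 (Int.natCast_nonneg d)
    omega
  subst hq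
  have : b = c := by
    have : (b : ℤ) = c := by linarith
    exact_mod_cast this
  subst this
  rfl

theorem myRep_surj (n : ℕ) (hn : 1 ≤ n) (A : FixedDetMatrix (Fin 2) ℤ (n : ℤ)) :
    ∃ x, myRel n (myRep n x) A := by
  have hm : (n : ℤ) ≠ 0 := by omega
  induction A using (FixedDetMatrices.induction_on hm) with
  | h0 A h10 h00 h01 h11 =>
    obtain ⟨A, hA⟩ := A
    simp only at *
    have hdet := hA
    rw [Matrix.det_fin_two, h10, mul_zero, sub_zero] at hdet
    have hpos : 0 < A 1 1 := by
      by_contra hcon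
      have : A 0 0 * A 1 1 ≤ 0 := mul_nonpos_of_nonneg_of_nonpos h00.le (by omega)
      omega
    rw [abs_of_nonneg h01, abs_of_pos hpos] at h11
    obtain ⟨a, ha⟩ := Int.eq_ofNat_of_zero_le h00.le
    obtain ⟨b, hb⟩ := Int.eq_ofNat_of_zero_le h01
    obtain ⟨d, hd⟩ := Int.eq_ofNat_of_zero_le hpos.le
    rw [hd] at hpos
    rw [hb, hd] at h11
    rw [ha, hd] at hdet
    have had : a * d = n := by exact_mod_cast hdet
    have hdp : 0 < d := by exact_mod_cast hpos
    refine ⟨⟨⟨d, Nat.mem_divisors.2 ⟨⟨a, by rw [← had, mul_comm]⟩, by omega⟩⟩,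
      ⟨b, by exact_mod_cast h11⟩⟩, 1, ?_⟩
    have hq : n / d = a := by rw [← had]; exact Nat.mul_div_cancel _ hdp
    simp only [myRep, Matrix.SpecialLinearGroup.coe_one, one_mul, hq]
    rw [Matrix.eta_fin_two A, h10, ha, hb, hd]
  | hS B hB =>
    obtain ⟨x, hx⟩ := hB
    exact ⟨x, (myRel_equiv n).trans hx ⟨_, rfl⟩⟩
  | hT B hB =>
    obtain ⟨x, hx⟩ := hB
    exact ⟨x, (myRel_equiv n).trans hx ⟨_, rfl⟩⟩

/-- for `n ≥ 1`, the set of `2×2` integer matrices of determinant `n` has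
exactly `σ(n) = Σ_{d ∣ n} d` orbits under left multiplication by `SL(2,ℤ)`. -/
theorem stmt13 (n : ℕ) (hn : 1 ≤ n) :
    Nat.card (Quot fun a b : {m : Matrix (Fin 2) (Fin 2) ℤ // m.det = (n : ℤ)} =>
      ∃ g : Matrix.SpecialLinearGroup (Fin 2) ℤ,
        (g : Matrix (Fin 2) (Fin 2) ℤ) * a.1 = b.1) =
      ∑ d ∈ n.divisors, d := by
  change Nat.card (Quot (myRel n)) = _
  have hb : Function.Bijective (fun x => Quot.mk (myRel n) (myRep n x)) := by
    constructor
    · intro x y h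
      exact myRep_inj n x y ((myRel_equiv n).eqvGen_iff.1 (Quot.eqvGen_exact h))
    · rintro ⟨A⟩
      obtain ⟨x, hx⟩ := myRep_surj n hn A
      exact ⟨x, Quot.sound hx⟩
  rw [← Nat.card_eq_of_bijective _ hb, Nat.card_eq_fintype_card, Fintype.card_sigma]
  simp only [Fintype.card_fin]
  exact Finset.sum_coe_sort n.divisors (fun d => d)
end

section
/- Let g ≥ 2 and let S ⊆ F^ℤ be the closed shift-invariant subspace of doubly infinite admissible sequences in the alphabet F of 2g letters (no letter immediately followed by its inverse), with the product topology (F discrete), and let T : S → S be the shift (T a)_i = a_{i+1}. Then every continuous function f : S → ℤ with f ∘ T = f is constant; equivalently, the kernel of the map δ = 1 − T on the group C(S,ℤ) of continuous integer-valued functions is the copy of ℤ consisting of constant functions. (This computes K₁(C(S) ⋊_T ℤ) ≅ ℤ via the Pimsner–Voiculescu exact sequence.) -/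
set_option synthInstance.maxHeartbeats 1000000
set_option maxHeartbeats 1000000

/-- The involution `i ↦ i + g mod 2g` on the alphabet of `2g` letters,
pairing each letter with its inverse. -/
def letterInv (g : ℕ) (x : Fin (2 * g)) : Fin (2 * g) :=
  ⟨((x : ℕ) + g) % (2 * g), Nat.mod_lt _ (Nat.lt_of_le_of_lt (Nat.zero_le _) x.isLt)⟩

/-- The space of doubly infinite admissible sequences (no letter immediately followed by its
inverse), a closed subspace of the product space. -/
def AdmSeq (g : ℕ) : Type :=
  {a : ℤ → Fin (2 * g) // ∀ i : ℤ, a (i + 1) ≠ letterInv g (a i)}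

instance (g : ℕ) : TopologicalSpace (AdmSeq g) :=
  inferInstanceAs (TopologicalSpace {a : ℤ → Fin (2 * g) // ∀ i : ℤ, a (i + 1) ≠ letterInv g (a i)})

/-- The two-sided shift on admissible sequences. -/
def admShift (g : ℕ) : AdmSeq g → AdmSeq g :=
  fun a => ⟨fun i => a.1 (i + 1), fun i => a.2 (i + 1)⟩

theorem adm_local (g : ℕ) (f : AdmSeq g → ℤ) (hf : Continuous f) (a : AdmSeq g) :
    ∃ N : ℕ, ∀ c : AdmSeq g, (∀ i : ℤ, -(N : ℤ) ≤ i → i ≤ N → c.1 i = a.1 i) → f c = f a := by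
  have ho : IsOpen (f ⁻¹' {f a}) := (isOpen_discrete _).preimage hf
  obtain ⟨U, hU, hUe⟩ := isOpen_induced_iff.1 ho
  have haU : a.1 ∈ U := by
    have : a ∈ f ⁻¹' {f a} := rfl
    rw [← hUe] at this
    exact this
  obtain ⟨I, u, hu, hIu⟩ := isOpen_pi_iff.1 hU a.1 haU
  refine ⟨I.sup Int.natAbs, fun c hc => ?_⟩
  have hcU : c.1 ∈ U := by
    apply hIu
    intro i hi
    have h1 : i.natAbs ≤ I.sup Int.natAbs := Finset.le_sup (f := Int.natAbs) hi
    rw [hc i (by omega) (by omega)]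
    exact (hu i hi).2
  have : c ∈ f ⁻¹' {f a} := by
    rw [← hUe]
    exact hcU
  exact this

theorem adm_iter (g : ℕ) (f : AdmSeq g → ℤ) (hinv : ∀ a : AdmSeq g, f (admShift g a) = f a)
    (n : ℕ) : ∀ c d : AdmSeq g, (∀ i : ℤ, d.1 i = c.1 (i + n)) → f d = f c := by
  induction n with
  | zero =>
    intro c d h
    have : d = c := Subtype.ext (funext fun i => by simpa using h i)
    rw [this]
  | succ n ih =>
    intro c d h
    rw [← hinv c]
    apply ih
    intro i
    rw [h i]
    show c.1 (i + ((n + 1 : ℕ) : ℤ)) = c.1 (i + n + 1)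
    exact congrArg c.1 (by push_cast; ring)

theorem adm_letter (g : ℕ) (hg : 2 ≤ g) (p q : Fin (2 * g)) :
    ∃ x : Fin (2 * g), x ≠ letterInv g p ∧ q ≠ letterInv g x := by
  have hinvol : ∀ x : Fin (2 * g), letterInv g (letterInv g x) = x := by
    intro x
    apply Fin.ext
    have := x.2
    show (((x : ℕ) + g) % (2 * g) + g) % (2 * g) = x
    rw [Nat.mod_add_mod, show (x : ℕ) + g + g = x + 2 * g by ring, Nat.add_mod_right,
      Nat.mod_eq_of_lt this]
  have hcard : ({letterInv g p, letterInv g q} : Finset (Fin (2 * g))).card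
      < Fintype.card (Fin (2 * g)) := by
    have := Finset.card_le_two (a := letterInv g p) (b := letterInv g q)
    rw [Fintype.card_fin]
    omega
  obtain ⟨x, hx⟩ : ∃ x, x ∉ ({letterInv g p, letterInv g q} : Finset (Fin (2 * g))) := by
    by_contra! h
    rw [Finset.eq_univ_of_forall h, Finset.card_univ] at hcard
    exact lt_irrefl _ hcard
  simp only [Finset.mem_insert, Finset.mem_singleton, not_or] at hx
  refine ⟨x, hx.1, fun h => hx.2 ?_⟩
  rw [h, hinvol]

/-- every continuous shift-invariant integer-valued function on the subshift of
admissible doubly infinite sequences is constant (the invariants of the shift are `ℤ`, i.e.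
`K₁(C(S) ⋊_T ℤ) ≅ ℤ`). -/
theorem stmt15 (g : ℕ) (hg : 2 ≤ g) (f : AdmSeq g → ℤ)
    (hf : Continuous f) (hinv : ∀ a : AdmSeq g, f (admShift g a) = f a) :
    ∀ a b : AdmSeq g, f a = f b := by
  intro a b
  obtain ⟨N, hN⟩ := adm_local g f hf a
  obtain ⟨M, hM⟩ := adm_local g f hf b
  obtain ⟨x, hx1, hx2⟩ := adm_letter g hg (a.1 N) (b.1 (-(M : ℤ)))
  let s : ℤ → Fin (2 * g) := fun i =>
    if i ≤ N then a.1 i else if i = N + 1 then x else b.1 (i - (N + 2 + M))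
  have hs : ∀ i : ℤ, s (i + 1) ≠ letterInv g (s i) := by
    intro i
    rcases lt_trichotomy i (N : ℤ) with h | h | h
    · have e1 : s (i + 1) = a.1 (i + 1) := if_pos (by omega)
      have e2 : s i = a.1 i := if_pos (by omega)
      rw [e1, e2]
      exact a.2 i
    · subst h
      have e1 : s ((N : ℤ) + 1) = x := by simp [s]
      have e2 : s N = a.1 N := if_pos le_rfl
      rw [e1, e2]
      exact hx1
    · have e1 : s (i + 1) = b.1 (i + 1 - (N + 2 + M)) := by
        simp only [s]
        rw [if_neg (by omega), if_neg (by omega)]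
      by_cases h' : i = N + 1
      · have e2 : s i = x := by
          simp only [s]
          rw [if_neg (by omega), if_pos h']
        rw [e1, e2, show i + 1 - (N + 2 + M) = -(M : ℤ) by omega]
        exact hx2
      · have e2 : s i = b.1 (i - (N + 2 + M)) := by
          simp only [s]
          rw [if_neg (by omega), if_neg h']
        rw [e1, e2, show i + 1 - ((N : ℤ) + 2 + M) = i - (N + 2 + M) + 1 by ring]
        exact b.2 _
  let c : AdmSeq g := ⟨s, hs⟩
  let d : AdmSeq g := ⟨fun i => s (i + (N + 2 + M : ℕ)), fun i => by
    have := hs (i + (N + 2 + M : ℕ))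
    beta_reduce
    rw [show i + 1 + ((N + 2 + M : ℕ) : ℤ) = i + (N + 2 + M : ℕ) + 1 by ring]
    exact this⟩
  have h1 : f c = f a := hN c fun i _ h => if_pos h
  have h2 : f d = f b := by
    apply hM
    intro i hi _
    show s (i + (N + 2 + M : ℕ)) = b.1 i
    simp only [s]
    rw [if_neg (by omega), if_neg (by omega)]
    exact congrArg b.1 (by push_cast; ring)
  have h3 : f d = f c := adm_iter g f hinv (N + 2 + M) c d fun i => rfl
  rw [← h1, ← h2, h3]
end

section
/- Let g ≥ 2. For n ≥ 0 let Wₙ be the set of admissible words (a₀,…,aₙ) of length n+1 in the alphabet F of 2g letters, a set of cardinality 2g(2g−1)ⁿ, and let Pₙ = ℤ^{Wₙ} be the free abelian group of ℤ-valued functions on Wₙ. For n ≥ 1 define δ : P_{n−1} → Pₙ by (δf)(a₀,…,aₙ) = f(a₀,…,a_{n−1}) − f(a₁,…,aₙ). Then the quotient Fₙ := Pₙ / δ(P_{n−1}) is a free abelian group, of rank 2g(2g−1)^{n−1}(2g−2) + 1 for every n ≥ 1, while F₀ := P₀ is free abelian of rank 2g. (These are the ranks of the filtration steps in the direct-limit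 description H¹(S_T) = colim Fₙ of the first cohomology of the mapping-torus solenoid of the Schottky subshift.) -/
set_option synthInstance.maxHeartbeats 1000000
set_option maxHeartbeats 1000000

/-- Admissible words `(a₀, …, aₙ)` of length `n+1`: no letter is immediately followed by its
inverse. -/
def Word (g n : ℕ) : Type :=
  {w : Fin (n + 1) → Fin (2 * g) // ∀ i : Fin n, w i.succ ≠ letterInv g (w i.castSucc)}

/-- Drop the last letter of an admissible word. -/
def wordInit (g n : ℕ) (w : Word g (n + 1)) : Word g n :=
  ⟨fun i => w.1 i.castSucc, fun i => w.2 i.castSucc⟩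

/-- Drop the first letter of an admissible word. -/
def wordTail (g n : ℕ) (w : Word g (n + 1)) : Word g n :=
  ⟨fun i => w.1 i.succ, fun i => w.2 i.succ⟩

/-- The map `δ : P_n → P_{n+1}`, `(δf)(a₀,…,a_{n+1}) = f(a₀,…,aₙ) − f(a₁,…,a_{n+1})`. -/
def deltaHom (g n : ℕ) : (Word g n → ℤ) →+ (Word g (n + 1) → ℤ) where
  toFun f := fun w => f (wordInit g n w) - f (wordTail g n w)
  map_zero' := by funext w; simp
  map_add' := by intro a b; funext w; simp [Pi.add_apply]; ring

lemma letterInv_invol (g : ℕ) (x : Fin (2 * g)) : letterInv g (letterInv g x) = x := by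
  apply Fin.ext
  have hx := x.isLt
  simp only [letterInv]
  rw [Nat.mod_add_mod, show (x : ℕ) + g + g = x + 2 * g by ring, Nat.add_mod_right,
    Nat.mod_eq_of_lt hx]

lemma exists_avoid (g : ℕ) (hg : 2 ≤ g) (a b : Fin (2 * g)) : ∃ c, c ≠ a ∧ c ≠ b := by
  by_contra! h
  have h1 : (Finset.univ : Finset (Fin (2 * g))) ⊆ {a, b} := by
    intro c _
    simp only [Finset.mem_insert, Finset.mem_singleton]
    by_cases hc : c = a
    · exact Or.inl hc
    · exact Or.inr (h c hc)
  have h2 := Finset.card_le_card h1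
  have h3 := Finset.card_le_two (a := a) (b := b)
  simp only [Finset.card_univ, Fintype.card_fin] at h2
  omega

def wordSnoc (g n : ℕ) (w : Word g n) (b : Fin (2 * g))
    (hb : b ≠ letterInv g (w.1 (Fin.last n))) : Word g (n + 1) :=
  ⟨Fin.snoc (α := fun _ => Fin (2 * g)) w.1 b, by
    intro i
    refine Fin.lastCases ?_ (fun i => ?_) i
    · rw [Fin.succ_last, Fin.snoc_last, Fin.snoc_castSucc]; exact hb
    · rw [Fin.succ_castSucc, Fin.snoc_castSucc, Fin.snoc_castSucc]; exact w.2 i⟩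

def wordCons (g n : ℕ) (w : Word g n) (b : Fin (2 * g))
    (hb : w.1 0 ≠ letterInv g b) : Word g (n + 1) :=
  ⟨Fin.cons (α := fun _ => Fin (2 * g)) b w.1, by
    intro i
    refine Fin.cases ?_ (fun i => ?_) i
    · rw [Fin.cons_succ, Fin.castSucc_zero, Fin.cons_zero]; exact hb
    · rw [Fin.cons_succ, ← Fin.succ_castSucc, Fin.cons_succ]; exact w.2 i⟩

lemma wordInit_snoc (g n : ℕ) (w : Word g n) (b) (hb) :
    wordInit g n (wordSnoc g n w b hb) = w := by
  apply Subtype.ext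
  funext i
  exact Fin.snoc_castSucc (α := fun _ => Fin (2 * g)) _ _ _

lemma wordTail_cons (g n : ℕ) (w : Word g n) (b) (hb) :
    wordTail g n (wordCons g n w b hb) = w := by
  apply Subtype.ext
  funext i
  rfl

lemma wordTail_surj (g : ℕ) (hg : 2 ≤ g) (n : ℕ) : Function.Surjective (wordTail g n) := by
  intro w
  obtain ⟨c, hc, -⟩ := exists_avoid g hg (letterInv g (w.1 0)) (w.1 0)
  refine ⟨wordCons g n w c ?_, wordTail_cons _ _ _ _ _⟩
  intro h
  apply hc
  rw [h, letterInv_invol]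

lemma word_connected {A : Type} (g : ℕ) (hg : 2 ≤ g) (n : ℕ) (f : Word g n → A)
    (hf : ∀ w, f (wordInit g n w) = f (wordTail g n w)) : ∀ x y, f x = f y := by
  induction n with
  | zero =>
    have key : ∀ x y : Word g 0, y.1 0 ≠ letterInv g (x.1 0) → f x = f y := by
      intro x y h
      have := hf (wordCons g 0 y (x.1 0) h)
      rw [wordTail_cons] at this
      rw [← this]
      congr 1
      apply Subtype.ext
      funext i
      fin_cases i
      rfl
    intro x y
    obtain ⟨c, hc1, hc2⟩ := exists_avoid g hg (letterInv g (x.1 0)) (letterInv g (y.1 0))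
    let z : Word g 0 := ⟨fun _ => c, fun i => i.elim0⟩
    exact (key x z hc1).trans (key y z hc2).symm
  | succ n ih =>
    have key : ∀ x y : Word g (n + 1), wordTail g n x = wordTail g n y → f x = f y := by
      intro x y h
      have hl : x.1 (Fin.last (n + 1)) = y.1 (Fin.last (n + 1)) :=
        congrFun (congrArg Subtype.val h) (Fin.last n)
      obtain ⟨c, hc, -⟩ := exists_avoid g hg (letterInv g (x.1 (Fin.last (n + 1)))) (x.1 0)
      have h1 := hf (wordSnoc g (n + 1) x c hc)
      have h2 := hf (wordSnoc g (n + 1) y c (hl ▸ hc))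
      rw [wordInit_snoc] at h1 h2
      rw [h1, h2]
      congr 1
      apply Subtype.ext
      funext i
      refine Fin.lastCases ?_ (fun i => ?_) i
      · simp only [wordTail, wordSnoc, Fin.succ_last, Fin.snoc_last]
      · simp only [wordTail, wordSnoc, Fin.succ_castSucc, Fin.snoc_castSucc]
        exact congrFun (congrArg Subtype.val h) i
    have hs := Function.rightInverse_surjInv (wordTail_surj g hg n)
    have hh : ∀ x, f (Function.surjInv (wordTail_surj g hg n) (wordTail g n x)) = f x :=
      fun x => key _ _ (hs _)
    have := ih (fun v => f (Function.surjInv (wordTail_surj g hg n) v)) (by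
      intro w
      obtain ⟨u, rfl⟩ := wordTail_surj g hg (n + 1) w
      have e : wordInit g n (wordTail g (n + 1) u) = wordTail g n (wordInit g (n + 1) u) := rfl
      simp only [e, hh]
      exact hf u)
    intro x y
    rw [← hh x, ← hh y]
    exact this _ _

instance wordFinite (g n : ℕ) : Finite (Word g n) := by
  unfold Word; infer_instance

def wordEquiv (g n : ℕ) :
    Word g (n + 1) ≃ Σ w : Word g n, {b : Fin (2 * g) // b ≠ letterInv g (w.1 (Fin.last n))} where
  toFun u := ⟨wordInit g n u, u.1 (Fin.last (n + 1)), u.2 (Fin.last n)⟩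
  invFun p := wordSnoc g n p.1 p.2.1 p.2.2
  left_inv u := by
    apply Subtype.ext
    funext i
    refine Fin.lastCases ?_ (fun i => ?_) i
    · simp only [wordSnoc, Fin.snoc_last]
    · simp only [wordSnoc, Fin.snoc_castSucc, wordInit]
  right_inv p := by
    obtain ⟨w, b, hb⟩ := p
    have h1 : wordInit g n (wordSnoc g n w b hb) = w := wordInit_snoc _ _ _ _ _
    refine Sigma.ext h1 ?_
    refine (Subtype.heq_iff_coe_eq ?_).2 ?_
    · intro x; simp only [h1]
    · simp only [wordSnoc, Fin.snoc_last]

lemma word_zero_equiv (g : ℕ) : Nonempty (Word g 0 ≃ Fin (2 * g)) :=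
  ⟨{ toFun := fun w => w.1 0
     invFun := fun c => ⟨fun _ => c, fun i => i.elim0⟩
     left_inv := by
      intro w
      apply Subtype.ext
      funext i
      fin_cases i
      rfl
     right_inv := fun c => rfl }⟩

lemma word_card (g n : ℕ) : Nat.card (Word g n) = 2 * g * (2 * g - 1) ^ n := by
  induction n with
  | zero =>
    obtain ⟨e⟩ := word_zero_equiv g
    rw [Nat.card_congr e]; simp
  | succ n ih =>
    have := Fintype.ofFinite (Word g n)
    rw [Nat.card_congr (wordEquiv g n), Nat.card_sigma]
    have : ∀ w : Word g n,
        Nat.card {b : Fin (2 * g) // b ≠ letterInv g (w.1 (Fin.last n))} = 2 * g - 1 := by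
      intro w
      rw [Nat.card_eq_fintype_card, Fintype.card_subtype_compl]
      simp
    simp only [this, Finset.sum_const, Finset.card_univ, smul_eq_mul]
    rw [← Nat.card_eq_fintype_card, ih]; ring

def deltaLin (g n : ℕ) : (Word g n → ℤ) →ₗ[ℤ] (Word g (n + 1) → ℤ) :=
  (deltaHom g n).toIntLinearMap

lemma deltaLin_apply (g n : ℕ) (f : Word g n → ℤ) (w) :
    deltaLin g n f w = f (wordInit g n w) - f (wordTail g n w) := rfl

lemma word_nonempty (g : ℕ) (hg : 2 ≤ g) (n : ℕ) : Nonempty (Word g n) := by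
  have : Nat.card (Word g n) ≠ 0 := by
    rw [word_card]
    have : 2 * g - 1 ≠ 0 := by omega
    have : 2 * g ≠ 0 := by omega
    positivity
  exact (Nat.card_ne_zero.1 this).1

lemma deltaLin_ker (g : ℕ) (hg : 2 ≤ g) (n : ℕ) :
    LinearMap.ker (deltaLin g n) = Submodule.span ℤ {(fun _ => 1 : Word g n → ℤ)} := by
  ext f
  rw [LinearMap.mem_ker, Submodule.mem_span_singleton]
  constructor
  · intro h
    have hc := word_connected g hg n f (fun w => by
      have := congrFun h w
      rw [deltaLin_apply] at this
      exact sub_eq_zero.1 this)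
    obtain ⟨x⟩ := word_nonempty g hg n
    refine ⟨f x, ?_⟩
    funext y
    simpa using hc x y
  · rintro ⟨a, rfl⟩
    funext w
    simp [deltaLin_apply]

lemma delta_saturated (g : ℕ) (hg : 2 ≤ g) (n : ℕ) (k : ℤ) (hk : k ≠ 0) (e : Word g (n + 1) → ℤ)
    (h : k • e ∈ LinearMap.range (deltaLin g n)) : e ∈ LinearMap.range (deltaLin g n) := by
  obtain ⟨f, hf⟩ := h
  have hf' : ∀ w, f (wordInit g n w) - f (wordTail g n w) = k * e w := fun w => congrFun hf w
  have hc := word_connected g hg n (fun x => f x % k) (fun w => by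
    apply Int.emod_eq_emod_iff_emod_sub_eq_zero.2
    rw [hf' w]
    simp)
  obtain ⟨x⟩ := word_nonempty g hg n
  have hd : ∀ y, k ∣ f y - f x := fun y =>
    Int.dvd_of_emod_eq_zero (Int.emod_eq_emod_iff_emod_sub_eq_zero.1 (hc y x))
  choose h hh using hd
  refine ⟨h, ?_⟩
  funext w
  rw [deltaLin_apply]
  apply mul_left_cancel₀ hk
  rw [mul_sub, ← hh, ← hh, ← hf' w]
  ring

lemma delta_quot (g : ℕ) (hg : 2 ≤ g) (m : ℕ) :
    Nonempty (((Word g (m + 1) → ℤ) ⧸ LinearMap.range (deltaLin g m)) ≃ₗ[ℤ]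
        (Fin (2 * g * (2 * g - 1) ^ m * (2 * g - 2) + 1) → ℤ)) := by
  have := Fintype.ofFinite (Word g m)
  have := Fintype.ofFinite (Word g (m + 1))
  have : Module.IsTorsionFree ℤ ((Word g (m + 1) → ℤ) ⧸ LinearMap.range (deltaLin g m)) := by
    rw [Module.isTorsionFree_iff_smul_eq_zero]
    intro k x hx
    obtain ⟨e, rfl⟩ := Submodule.Quotient.mk_surjective _ x
    by_cases hk : k = 0
    · exact Or.inl hk
    right
    rw [← Submodule.Quotient.mk_smul, Submodule.Quotient.mk_eq_zero] at hx
    rw [Submodule.Quotient.mk_eq_zero]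
    exact delta_saturated g hg m k hk e hx
  have : Module.Free ℤ ((Word g (m + 1) → ℤ) ⧸ LinearMap.range (deltaLin g m)) := inferInstance
  have h1 := Submodule.finrank_quotient_add_finrank (LinearMap.range (deltaLin g m))
  have h2 := Submodule.finrank_quotient_add_finrank (LinearMap.ker (deltaLin g m))
  rw [(deltaLin g m).quotKerEquivRange.finrank_eq] at h2
  rw [Module.finrank_fintype_fun_eq_card, ← Nat.card_eq_fintype_card, word_card] at h1 h2
  have h3 : Module.finrank ℤ (LinearMap.ker (deltaLin g m)) = 1 := by
    rw [deltaLin_ker g hg]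
    have hne : (fun _ => 1 : Word g m → ℤ) ≠ 0 := by
      obtain ⟨x⟩ := word_nonempty g hg m
      intro h
      have := congrFun h x
      simp at this
    rw [← (LinearEquiv.toSpanNonzeroSingleton ℤ (Word g m → ℤ) _ hne).finrank_eq]
    exact Module.finrank_self ℤ
  refine ⟨LinearEquiv.ofFinrankEq _ _ ?_⟩
  rw [Module.finrank_fintype_fun_eq_card, Fintype.card_fin]
  obtain ⟨q, hq⟩ : ∃ q, 2 * g = q + 2 := ⟨2 * g - 2, by omega⟩
  rw [hq] at h1 h2 ⊢
  simp only [Nat.add_sub_cancel, show q + 2 - 1 = q + 1 by omega] at h1 h2 ⊢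
  rw [pow_succ] at h1
  have : (q + 2) * ((q + 1) ^ m * (q + 1)) = (q + 2) * (q + 1) ^ m * q + (q + 2) * (q + 1) ^ m := by
    ring
  omega

/-- the number of admissible words of length `n+1` is `2g(2g−1)ⁿ`;
`F₀ = P₀` is free abelian of rank `2g`; and for `n ≥ 1` the quotient
`Fₙ = Pₙ/δ(P_{n−1})` is free abelian of rank `2g(2g−1)^{n−1}(2g−2) + 1`. -/
theorem stmt16 (g : ℕ) (hg : 2 ≤ g) :
    (∀ n : ℕ, Nat.card (Word g n) = 2 * g * (2 * g - 1) ^ n) ∧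
    Nonempty ((Word g 0 → ℤ) ≃+ (Fin (2 * g) → ℤ)) ∧
    (∀ m : ℕ,
      Nonempty (((Word g (m + 1) → ℤ) ⧸ (deltaHom g m).range) ≃+
        (Fin (2 * g * (2 * g - 1) ^ m * (2 * g - 2) + 1) → ℤ))) := by
  refine ⟨word_card g, ?_, fun m => ?_⟩
  · obtain ⟨e⟩ := word_zero_equiv g
    exact ⟨(LinearEquiv.funCongrLeft ℤ ℤ e.symm).toAddEquiv⟩
  · obtain ⟨e⟩ := delta_quot g hg m
    have h : (deltaHom g m).range = (LinearMap.range (deltaLin g m)).toAddSubgroup := by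
      ext x
      rfl
    exact ⟨(QuotientAddGroup.quotientAddEquivOfEq h).trans e.toAddEquiv⟩
end

section
/- Fix an integer g ≥ 1 and a real number s > 0. Suppose F : ℂ → ℂ is complex-differentiable at every point z ≠ 1 and satisfies F(z) = Σ_{n=0}^∞ 2g · ((s+n)/(2π))^{−z} for all z with Re z > 1 (where the series converges absolutely). Then exp(−F′(0)) = ((2π)^{−s} Γ(s))^{−2g} = Γ_ℂ(s)^{−2g}. That is, the zeta-regularized determinant of the operator (s − Φ)/(2π), where Φ has eigenvalue −n with multiplicity 2g for each integer n ≥ 0, equals the inverse of the archimedean local L-factor L(H¹(X), s) = Γ_ℂ(s)^{2g} of a genus-g curve at a complex place. -/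
set_option synthInstance.maxHeartbeats 1000000
set_option maxHeartbeats 1000000

open Filter Topology

noncomputable def trapT (x : ℝ) (z : ℂ) : ℂ :=
  ((x : ℂ) ^ (-z) + ((x + 1 : ℝ) : ℂ) ^ (-z)) / 2
    + (((x + 1 : ℝ) : ℂ) ^ (1 - z) - (x : ℂ) ^ (1 - z)) / (z - 1)

lemma dcp (x : ℝ) (r : ℂ) (u : ℝ) (hx : 0 < x + u) :
    HasDerivAt (fun v : ℝ => ((x + v : ℝ) : ℂ) ^ r) (r * ((x + u : ℝ) : ℂ) ^ (r - 1)) u := by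
  have h1 : HasDerivAt (fun v : ℝ => ((x + v : ℝ) : ℂ)) (1 : ℂ) u := by
    have := ((hasDerivAt_id u).const_add x).ofReal_comp
    simpa using this
  have h2 := (hasDerivAt_id ((x + u : ℝ) : ℂ)).cpow_const (c := r)
    (by simp only [id]; exact Complex.ofReal_mem_slitPlane.2 hx)
  have h3 := h2.comp u h1
  simpa [Function.comp_def] using h3

lemma trap_bound (x : ℝ) (hx : 0 < x) (z : ℂ) (hz1 : z ≠ 1) (h1 : -(1/2) < z.re) (h2 : ‖z‖ < 10) :
    ‖trapT x z‖ ≤ 110 * (x ^ (-(3/2) : ℝ) + x ^ (-12 : ℝ)) := by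
  have hz1' : z - 1 ≠ 0 := sub_ne_zero.2 hz1
  have hz1'' : 1 - z ≠ 0 := sub_ne_zero.2 (Ne.symm hz1)
  let P : ℝ → ℂ := fun u => (u * (1 - u) / 2 : ℂ) * (-z * ((x + u : ℝ) : ℂ) ^ (-z - 1))
    - (1 - 2 * u) / 2 * ((x + u : ℝ) : ℂ) ^ (-z) + ((x + u : ℝ) : ℂ) ^ (1 - z) / (z - 1)
  let P' : ℝ → ℂ := fun u => (u * (1 - u) / 2 : ℂ) * (-z * ((-z - 1) * ((x + u : ℝ) : ℂ) ^ (-z - 1 - 1)))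
  have hP : ∀ u ∈ Set.Icc (0:ℝ) 1, HasDerivWithinAt P (P' u) (Set.Icc 0 1) u := by
    intro u hu
    have hxu : 0 < x + u := by linarith [hu.1]
    have e1 := dcp x (-z - 1) u hxu
    have e2 := dcp x (-z) u hxu
    have e3 := dcp x (1 - z) u hxu
    have hu1 : HasDerivAt (fun v : ℝ => (v : ℂ)) 1 u := by
      simpa using (hasDerivAt_id u).ofReal_comp
    have hu2 := (hu1.mul (hu1.const_sub 1)).div_const 2
    have hu3 := ((hu1.const_mul 2).const_sub 1).div_const 2
    have := ((hu2.mul (e1.const_mul (-z))).sub (hu3.mul e2)).add (e3.div_const (z - 1))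
    refine HasDerivAt.hasDerivWithinAt ?_
    refine this.congr_deriv ?_
    have : (1 - z - 1 : ℂ) = -z := by ring
    rw [this]
    simp only [P', Pi.mul_apply]
    field_simp
    ring
  have hb : ∀ u ∈ Set.Ico (0:ℝ) 1, ‖P' u‖ ≤ 110 * (x ^ (-(3/2) : ℝ) + x ^ (-12 : ℝ)) := by
    intro u hu
    have hu0 := hu.1
    have hu1 := hu.2
    have hxu : 0 < x + u := by linarith
    have hre : (z.re) < 10 := lt_of_le_of_lt (Complex.re_le_norm z) h2
    simp only [P', norm_mul]
    rw [Complex.norm_cpow_eq_rpow_re_of_pos hxu]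
    have a1 : ‖(u * (1 - u) / 2 : ℂ)‖ ≤ 1 := by
      have : (u * (1 - u) / 2 : ℂ) = ((u * (1 - u) / 2 : ℝ) : ℂ) := by push_cast; ring
      rw [this, Complex.norm_real, Real.norm_eq_abs, abs_le]
      constructor <;> nlinarith
    have a2 : ‖-z‖ ≤ 10 := by rw [norm_neg]; exact h2.le
    have a3 : ‖-z - 1‖ ≤ 11 := by
      calc ‖-z - 1‖ ≤ ‖-z‖ + ‖(1:ℂ)‖ := norm_sub_le _ _
        _ ≤ 11 := by rw [norm_one]; linarith
    have a4 : (x + u) ^ ((-z - 1 - 1).re) ≤ x ^ (-(3/2) : ℝ) + x ^ (-12 : ℝ) := by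
      have hr : (-z - 1 - 1).re = -z.re - 2 := by simp; ring
      rw [hr]
      have p1 : 0 < x ^ (-(3/2) : ℝ) := Real.rpow_pos_of_pos hx _
      have p2 : 0 < x ^ (-12 : ℝ) := Real.rpow_pos_of_pos hx _
      have : (x + u) ^ (-z.re - 2) ≤ x ^ (-z.re - 2) :=
        Real.rpow_le_rpow_of_nonpos hx (by linarith) (by linarith)
      refine this.trans ?_
      rcases le_total 1 x with h | h
      · have := Real.rpow_le_rpow_of_exponent_le h (show -z.re - 2 ≤ -(3/2) by linarith)
        linarith
      · have := Real.rpow_le_rpow_of_exponent_ge hx h (show -12 ≤ -z.re - 2 by linarith)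
        linarith
    calc _ ≤ 1 * (10 * (11 * (x ^ (-(3/2) : ℝ) + x ^ (-12 : ℝ)))) := by gcongr
      _ = _ := by ring
  have := norm_image_sub_le_of_norm_deriv_le_segment_01' hP hb
  have h3 : P 1 - P 0 = trapT x z := by
    simp only [P, trapT]
    push_cast
    simp only [add_zero]
    ring
  rwa [h3] at this

lemma trap_sum (s : ℝ) (z : ℂ) (N : ℕ) :
    ∑ n ∈ Finset.range N, trapT (s + n) z =
      ∑ n ∈ Finset.range N, ((s + n : ℝ) : ℂ) ^ (-z) - (s : ℂ) ^ (-z) / 2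
        + ((s + N : ℝ) : ℂ) ^ (-z) / 2
        + (((s + N : ℝ) : ℂ) ^ (1 - z) - (s : ℂ) ^ (1 - z)) / (z - 1) := by
  induction N with
  | zero => simp
  | succ N ih =>
    rw [Finset.sum_range_succ, Finset.sum_range_succ, ih, trapT]
    have : (s + (N + 1 : ℕ) : ℝ) = s + N + 1 := by push_cast; ring
    rw [this]
    ring

lemma u_summable (s : ℝ) (hs : 0 < s) :
    Summable fun n : ℕ => 110 * ((s + n : ℝ) ^ (-(3/2) : ℝ) + (s + n : ℝ) ^ (-12 : ℝ)) := by
  have key : ∀ a : ℝ, 1 < a → Summable fun n : ℕ => (s + n : ℝ) ^ (-a) := by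
    intro a ha
    refine ((Real.summable_one_div_nat_add_rpow s a).2 ha).congr fun n => ?_
    have : 0 < s + n := by positivity
    rw [add_comm, abs_of_pos this, Real.rpow_neg this.le, one_div]
  exact ((key _ (by norm_num)).add (key _ (by norm_num))).mul_left _

/-- derivative at 0 -/
lemma trap_deriv (x : ℝ) (hx : 0 < x) :
    HasDerivAt (trapT x) ((-(Real.log x + Real.log (x + 1)) / 2
      + (((x + 1) * Real.log (x + 1) - (x + 1)) - (x * Real.log x - x)) : ℝ) : ℂ) 0 := by
  have hx1 : 0 < x + 1 := by linarith
  have g1 : ∀ y : ℝ, 0 < y → HasDerivAt (fun z : ℂ => (y : ℂ) ^ (-z)) (-(Real.log y : ℂ)) 0 := by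
    intro y hy
    have := (hasDerivAt_id (0:ℂ)).neg.const_cpow (c := (y : ℂ)) (Or.inl (by exact_mod_cast hy.ne'))
    simpa [Complex.ofReal_log hy.le] using this
  have g2 : ∀ y : ℝ, 0 < y → HasDerivAt (fun z : ℂ => (y : ℂ) ^ (1 - z)) (-(y * Real.log y : ℂ)) 0 := by
    intro y hy
    have := ((hasDerivAt_id (0:ℂ)).const_sub 1).const_cpow (c := (y : ℂ)) (Or.inl (by exact_mod_cast hy.ne'))
    simpa [Complex.ofReal_log hy.le] using this
  have g3 : HasDerivAt (fun z : ℂ => z - 1) 1 0 := (hasDerivAt_id (0:ℂ)).sub_const 1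
  have := (((g1 x hx).add (g1 (x+1) hx1)).div_const 2).add
    (((g2 (x+1) hx1).sub (g2 x hx)).div g3 (by norm_num))
  refine this.congr_deriv ?_
  push_cast
  simp
  ring

lemma trap_deriv_sum (s : ℝ) (N : ℕ) :
    ∑ n ∈ Finset.range N, (-(Real.log (s + n) + Real.log (s + n + 1)) / 2
      + (((s + n + 1) * Real.log (s + n + 1) - (s + n + 1)) - ((s + n) * Real.log (s + n) - (s + n))))
    = - ∑ n ∈ Finset.range N, Real.log (s + n) + Real.log s / 2 - Real.log (s + N) / 2
      + ((s + N) * Real.log (s + N) - (s + N)) - (s * Real.log s - s) := by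
  induction N with
  | zero => simp
  | succ N ih =>
    rw [Finset.sum_range_succ, Finset.sum_range_succ, ih]
    have : (s + (N + 1 : ℕ) : ℝ) = s + N + 1 := by push_cast; ring
    rw [this]
    ring

lemma lim_aux (s : ℝ) (hs : 0 < s) :
    Tendsto (fun N : ℕ => - ∑ n ∈ Finset.range N, Real.log (s + n) - Real.log (s + N) / 2
      + ((s + N) * Real.log (s + N) - (s + N))) atTop
      (𝓝 (Real.log (Real.Gamma s) - Real.log (2 * Real.pi) / 2)) := by
  have l1 := Real.BohrMollerup.tendsto_log_gamma hs
  have l2 := (Stirling.tendsto_stirlingSeq_sqrt_pi).log (by positivity)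
  have l3 := (Real.tendsto_mul_log_one_add_div_atTop s).comp (tendsto_natCast_atTop_atTop (R := ℝ))
  have l4 : Tendsto (fun N : ℕ => Real.log (1 + s / N)) atTop (𝓝 0) := by
    have : Tendsto (fun N : ℕ => 1 + s / (N : ℝ)) atTop (𝓝 (1 + 0)) :=
      tendsto_const_nhds.add (tendsto_const_div_atTop_nhds_zero_nat s)
    simpa using this.log (by norm_num)
  have := (((l1.sub l2).add l3).add (l4.const_mul (s + 1/2))).sub_const (s + Real.log 2 / 2)
  have e : Real.log (Real.Gamma s) - Real.log (√Real.pi) + s + (s + 1/2) * 0 - (s + Real.log 2 / 2)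
      = Real.log (Real.Gamma s) - Real.log (2 * Real.pi) / 2 := by
    rw [Real.log_sqrt Real.pi_pos.le, Real.log_mul (by norm_num) Real.pi_ne_zero]; ring
  rw [e] at this
  refine this.congr' ?_
  filter_upwards [eventually_gt_atTop 0] with N hN
  have hN' : (0:ℝ) < N := by exact_mod_cast hN
  have h5 : Real.log (1 + s / N) = Real.log (s + N) - Real.log N := by
    rw [← Real.log_div (by positivity) (by positivity)]
    congr 1; field_simp; ring
  simp only [Function.comp, Real.BohrMollerup.logGammaSeq, Stirling.log_stirlingSeq_formula, h5]
  rw [Finset.sum_range_succ, Real.log_mul (by norm_num) hN'.ne', Real.log_div hN'.ne' (Real.exp_ne_zero _),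
    Real.log_exp]
  ring


lemma reg_main (s : ℝ) (hs : 0 < s) (Z : ℂ → ℂ)
    (hZ : ∀ z : ℂ, z ≠ 1 → DifferentiableAt ℂ Z z)
    (hser : ∀ z : ℂ, 1 < z.re → HasSum (fun n : ℕ => ((s + n : ℝ) : ℂ) ^ (-z)) (Z z)) :
    Z 0 = 1 / 2 - s ∧
    deriv Z 0 = ((Real.log (Real.Gamma s) - Real.log (2 * Real.pi) / 2 : ℝ) : ℂ) := by
  have hs0 : (s : ℂ) ≠ 0 := by exact_mod_cast hs.ne'
  let U : Set ℂ := {z | -(1/2) < z.re} ∩ {z | z.re - 2 * z.im < 1/2} ∩ Metric.ball 0 10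
  have hUo : IsOpen U := by
    refine ((isOpen_lt continuous_const Complex.continuous_re).inter
      (isOpen_lt ?_ continuous_const)).inter Metric.isOpen_ball
    fun_prop
  have hUc : Convex ℝ U := by
    refine ((convex_halfSpace_re_gt _).inter ?_).inter (convex_ball _ _)
    intro a ha b hb p q hp hq hpq
    simp only [Set.mem_ofPred_eq, Complex.add_re, Complex.add_im, Complex.real_smul,
      Complex.re_ofReal_mul, Complex.im_ofReal_mul] at ha hb ⊢
    have hq' : q = 1 - p := by linarith
    subst hq'
    rcases eq_or_lt_of_le hp with h | h
    · subst h; nlinarith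
    · nlinarith
  have h0U : (0 : ℂ) ∈ U := by
    simp [U]
  have h1U : ∀ z ∈ U, z ≠ 1 := by
    rintro z hz rfl
    have := hz.1.2
    simp only [Set.mem_ofPred_eq, Complex.one_re, Complex.one_im] at this
    norm_num at this
  have hpos : ∀ n : ℕ, 0 < s + n := fun n => by positivity
  have hbd : ∀ n : ℕ, ∀ w ∈ U, ‖trapT (s + n) w‖ ≤
      110 * ((s + n : ℝ) ^ (-(3/2) : ℝ) + (s + n : ℝ) ^ (-12 : ℝ)) := by
    intro n w hw
    exact trap_bound _ (hpos n) w (h1U w hw) hw.1.1 (by simpa using hw.2)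
  have hcd : ∀ (y : ℝ), 0 < y → Differentiable ℂ (fun z : ℂ => (y : ℂ) ^ (-z)) := by
    intro y hy z
    exact DifferentiableAt.const_cpow (by fun_prop) (Or.inl (by exact_mod_cast hy.ne'))
  have hcd1 : ∀ (y : ℝ), 0 < y → Differentiable ℂ (fun z : ℂ => (y : ℂ) ^ (1 - z)) := by
    intro y hy z
    exact DifferentiableAt.const_cpow (by fun_prop) (Or.inl (by exact_mod_cast hy.ne'))
  have hTd : ∀ n : ℕ, DifferentiableOn ℂ (trapT (s + n)) U := by
    intro n z hz
    have hz1 : z - 1 ≠ 0 := sub_ne_zero.2 (h1U z hz)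
    have hp1 : 0 < s + n + 1 := by linarith [hpos n]
    refine DifferentiableAt.differentiableWithinAt ?_
    refine DifferentiableAt.add ((((hcd _ (hpos n)) z).add ((hcd _ hp1) z)).div_const 2) ?_
    exact (((hcd1 _ hp1) z).sub ((hcd1 _ (hpos n)) z)).div (by fun_prop) hz1
  have hus := u_summable s hs
  have hSd := Complex.differentiableOn_tsum_of_summable_norm hus hTd hUo hbd
  have hSs := Complex.hasSum_deriv_of_summable_norm hus hTd hUo hbd h0U
  set S : ℂ → ℂ := fun w => ∑' n : ℕ, trapT (s + n) w with hS
  let E : ℂ → ℂ := fun z => (s : ℂ) ^ (-z) / 2 + (s : ℂ) ^ (1 - z) / (z - 1)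
  have hEd : DifferentiableOn ℂ E U := by
    intro z hz
    have hz1 : z - 1 ≠ 0 := sub_ne_zero.2 (h1U z hz)
    exact (((hcd s hs z).div_const 2).add ((hcd1 s hs z).div (by fun_prop) hz1)).differentiableWithinAt
  have hZd : DifferentiableOn ℂ Z U := fun z hz => (hZ z (h1U z hz)).differentiableWithinAt
  have hov : ∀ z ∈ U, 1 < z.re → Z z = E z + S z := by
    intro z hz hre
    have hsum : Summable fun n : ℕ => trapT (s + n) z :=
      Summable.of_norm_bounded hus (fun n => hbd n z hz)
    have t1 := hsum.hasSum.tendsto_sum_nat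
    have t2 := (hser z hre).tendsto_sum_nat
    have t3 := (hser z hre).summable.tendsto_atTop_zero
    have t4 : Tendsto (fun N : ℕ => ((s + N : ℝ) : ℂ) ^ (1 - z)) atTop (𝓝 0) := by
      rw [tendsto_zero_iff_norm_tendsto_zero]
      have : Tendsto (fun N : ℕ => (s + N : ℝ) ^ (-(z.re - 1))) atTop (𝓝 0) :=
        (tendsto_rpow_neg_atTop (by linarith)).comp
          (tendsto_atTop_add_const_left _ s (tendsto_natCast_atTop_atTop (R := ℝ)))
      refine this.congr fun N => ?_
      rw [Complex.norm_cpow_eq_rpow_re_of_pos (hpos N)]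
      simp
    have t5 := (((t2.sub_const ((s : ℂ) ^ (-z) / 2)).add (t3.div_const 2))).add
      ((t4.sub_const ((s : ℂ) ^ (1 - z))).div_const (z - 1))
    have t6 := tendsto_nhds_unique (t1.congr (fun N => trap_sum s z N)) t5
    simp only [S, E, t6]
    ring
  have hw : (2 + 2 * Complex.I : ℂ) ∈ U := by
    refine ⟨⟨?_, ?_⟩, ?_⟩
    · simp; norm_num
    · simp; norm_num
    · rw [mem_ball_zero_iff]
      calc ‖(2 + 2 * Complex.I : ℂ)‖ ≤ ‖(2:ℂ)‖ + ‖2 * Complex.I‖ := norm_add_le _ _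
        _ < 10 := by simp; norm_num
  have hev : Z =ᶠ[𝓝 (2 + 2 * Complex.I : ℂ)] fun z => E z + S z := by
    have : ∀ᶠ z in 𝓝 (2 + 2 * Complex.I : ℂ), 1 < z.re :=
      (isOpen_lt continuous_const Complex.continuous_re).mem_nhds (by simp)
    filter_upwards [this, hUo.mem_nhds hw] with z h1 h2 using hov z h2 h1
  have hEq : Set.EqOn Z (fun z => E z + S z) U :=
    AnalyticOnNhd.eqOn_of_preconnected_of_eventuallyEq (hZd.analyticOnNhd hUo)
      ((hEd.add hSd).analyticOnNhd hUo) hUc.isPreconnected hw hev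
  have hT0 : ∀ n : ℕ, trapT (s + n) 0 = 0 := by
    intro n
    simp [trapT]
  constructor
  · rw [hEq h0U]
    simp [E, S, hT0]
    ring
  · have hd : deriv Z 0 = deriv E 0 + deriv S 0 := by
      rw [(hEq.eventuallyEq_of_mem (hUo.mem_nhds h0U)).deriv_eq]
      exact deriv_add ((hEd 0 h0U).differentiableAt (hUo.mem_nhds h0U))
        ((hSd 0 h0U).differentiableAt (hUo.mem_nhds h0U))
    have hE0 : deriv E 0 = ((-(Real.log s) / 2 + (s * Real.log s - s) : ℝ) : ℂ) := by
      have g1 := (hasDerivAt_id (0:ℂ)).neg.const_cpow (c := (s : ℂ)) (Or.inl hs0)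
      have g2 := ((hasDerivAt_id (0:ℂ)).const_sub 1).const_cpow (c := (s : ℂ)) (Or.inl hs0)
      have g3 : HasDerivAt (fun z : ℂ => z - 1) 1 0 := (hasDerivAt_id (0:ℂ)).sub_const 1
      have := (g1.div_const 2).add (g2.div g3 (by norm_num))
      refine (this.congr_deriv ?_).deriv
      push_cast [Complex.ofReal_log hs.le]
      simp
    have k1 := hSs.tendsto_sum_nat
    have k2 : Tendsto (fun N : ℕ => (((- ∑ n ∈ Finset.range N, Real.log (s + n) + Real.log s / 2
        - Real.log (s + N) / 2 + ((s + N) * Real.log (s + N) - (s + N)) - (s * Real.log s - s) : ℝ)) : ℂ))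
        atTop (𝓝 (deriv S 0)) := by
      refine k1.congr fun N => ?_
      rw [← trap_deriv_sum, Complex.ofReal_sum]
      exact Finset.sum_congr rfl fun n _ => (trap_deriv (s + n) (hpos n)).deriv
    have k3 := (Complex.continuous_ofReal.tendsto _).comp
      ((lim_aux s hs).add_const (Real.log s / 2 - (s * Real.log s - s)))
    have k4 := tendsto_nhds_unique k2 (k3.congr fun N => by
      simp only [Function.comp]; congr 1; ring)
    rw [hd, hE0, k4]
    push_cast
    ring

/-- the zeta-regularized determinant of `(s − Φ)/(2π)`, where `Φ` has eigenvalue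
`−n` with multiplicity `2g` for each `n ≥ 0`, equals the inverse of the archimedean local
`L`-factor `Γ_ℂ(s)^{2g} = ((2π)^{−s} Γ(s))^{2g}` of a genus-`g` curve at a complex place. -/
theorem stmt17 (g : ℕ) (hg : 1 ≤ g) (s : ℝ) (hs : 0 < s) (F : ℂ → ℂ)
    (hF : ∀ z : ℂ, z ≠ 1 → DifferentiableAt ℂ F z)
    (habs : ∀ z : ℂ, 1 < z.re →
      Summable fun n : ℕ => ‖(2 * (g : ℂ)) * ((((s + n) / (2 * Real.pi) : ℝ)) : ℂ) ^ (-z)‖)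
    (hser : ∀ z : ℂ, 1 < z.re →
      F z = ∑' n : ℕ, (2 * (g : ℂ)) * ((((s + n) / (2 * Real.pi) : ℝ)) : ℂ) ^ (-z)) :
    Complex.exp (-(deriv F 0)) =
      (((2 * Real.pi : ℝ) : ℂ) ^ (-(s : ℂ)) * Complex.Gamma (s : ℂ)) ^ (-(2 * (g : ℤ))) := by
  have hp : (0:ℝ) < 2 * Real.pi := by positivity
  have hpc : ((2 * Real.pi : ℝ) : ℂ) ≠ 0 := by exact_mod_cast hp.ne'
  have hg0 : (g : ℂ) ≠ 0 := by exact_mod_cast (by omega : g ≠ 0)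
  have hgc : (2 * (g : ℂ)) ≠ 0 := mul_ne_zero two_ne_zero hg0
  set c : ℂ := ((2 * Real.pi : ℝ) : ℂ) with hc
  let Z : ℂ → ℂ := fun z => c ^ (-z) * F z / (2 * (g : ℂ))
  have hcz : ∀ z : ℂ, c ^ (-z) * c ^ z = 1 := fun z => by
    rw [← Complex.cpow_add _ _ hpc]; simp
  have hZ : ∀ z : ℂ, z ≠ 1 → DifferentiableAt ℂ Z z := by
    intro z hz
    exact ((DifferentiableAt.const_cpow (by fun_prop) (Or.inl hpc)).mul (hF z hz)).div_const _
  have hterm : ∀ (n : ℕ) (z : ℂ), ((s + n : ℝ) : ℂ) ^ (-z) =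
      c ^ (-z) * ((2 * (g : ℂ)) * ((((s + n) / (2 * Real.pi) : ℝ)) : ℂ) ^ (-z)) / (2 * (g : ℂ)) := by
    intro n z
    have h1 : (s + n : ℝ) = (2 * Real.pi) * ((s + n) / (2 * Real.pi)) := by field_simp
    conv_lhs => rw [h1]
    rw [Complex.ofReal_mul, Complex.mul_cpow_ofReal_nonneg hp.le (by positivity), ← hc]
    field_simp
  have hZs : ∀ z : ℂ, 1 < z.re → HasSum (fun n : ℕ => ((s + n : ℝ) : ℂ) ^ (-z)) (Z z) := by
    intro z hz
    have h1 := (habs z hz).of_norm.hasSum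
    rw [← hser z hz] at h1
    have h2 := (h1.mul_left (c ^ (-z))).div_const (2 * (g : ℂ))
    rw [funext fun n => hterm n z]
    exact h2
  obtain ⟨hZ0, hZ1⟩ := reg_main s hs Z hZ hZs
  have hFZ : F = fun z => (2 * (g : ℂ)) * (c ^ z * Z z) := by
    funext z
    have := hcz z
    simp only [Z]
    field_simp
    linear_combination (-F z) * this
  have hlogc : Complex.log c = (Real.log (2 * Real.pi) : ℂ) := (Complex.ofReal_log hp.le).symm
  have hFd : deriv F 0 = (2 * (g : ℂ)) *
      ((Real.log (Real.Gamma s) - s * Real.log (2 * Real.pi) : ℝ) : ℂ) := by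
    have g1 := (hasDerivAt_id (0:ℂ)).const_cpow (c := c) (Or.inl hpc)
    have g2 := (hZ 0 (by norm_num)).hasDerivAt
    have := (g1.mul g2).const_mul (2 * (g : ℂ))
    rw [hFZ]
    refine (this.congr_deriv ?_).deriv
    rw [hZ1, hZ0, hlogc]
    simp only [id, Complex.cpow_zero]
    push_cast
    ring
  have hG := Real.Gamma_pos_of_pos hs
  have hbase : c ^ (-(s : ℂ)) * Complex.Gamma (s : ℂ) =
      Complex.exp ((Real.log (Real.Gamma s) - s * Real.log (2 * Real.pi) : ℝ) : ℂ) := by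
    rw [Complex.cpow_def_of_ne_zero hpc, hlogc, Complex.Gamma_ofReal, ← Real.exp_log hG,
      Complex.ofReal_exp, ← Complex.exp_add, Real.log_exp]
    congr 1
    push_cast
    ring
  rw [hbase, hFd, ← Complex.exp_int_mul]
  congr 1
  push_cast
  ring
end
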